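/- arXiv:2407.03099 — 4 statements merged into one kernel-verified Lean document; each statement's English description precedes it below -/
import Mathlib

section
/- (Main result, discretized analog of the RH.) For every ε > 0 there exists a constant C > 0 such that for all integers n ≥ 1, (1/A_n) · Σ_{i=1}^{A_n} |θ_i| ≤ C·n^ε, where A_n := Σ_{k=1}^{n} φ(k), θ'_j := k̂(T^{j−1}(1/n, 1)) − 3 and θ_i := Σ_{j=1}^{i} θ'_j. (Note that (1/n, 1) lies in the Farey triangle Ω, so all iterates T^{j}(1/n,1) are defined.) -/
/-!
The point `(1 / n, 1)` runs under the BCZ map through the points `(a / n, b / n)`, where `a, b` are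
the denominators of consecutive Farey fractions of order `n`. On an arc between two Farey
neighbours of denominators `a, b`, the sum of `2 (k̂ - 3)` telescopes along the Stern–Brocot tree to
an explicit expression in `⌊(n ± b) / a⌋` and `⌊(n ± a) / b⌋`, which has absolute value at most `6`
if `a ≤ b ≤ 2 a`. Each mediant splits its arc into two, one of which is balanced in this sense.
Hence the partial sum of `2 (k̂ - 3)` at a Farey fraction is at most `2` plus `6` times its depth in
the tree.

The depths add up to the sum of all subtree sizes. The subtree below the pair `(a, b)` has at most
`n² / (a b)` nodes, so this sum is at most `n² (1 + log n)²`, whereas `A_n ≥ n² / 12`. The average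
of `|θ_i|` is therefore `O(log² n)`.
-/

/-- The BCZ map `T(a,b) = (b, ⌊(1+a)/b⌋·b − a)`. -/
noncomputable def bczT (p : ℝ × ℝ) : ℝ × ℝ :=
  (p.2, (⌊(1 + p.1) / p.2⌋ : ℝ) * p.2 - p.1)

/-- `k̂(a,b) = (⌊(1+a)/b⌋ + ⌊(1+b)/a⌋)/2`. -/
noncomputable def khat (p : ℝ × ℝ) : ℝ :=
  ((⌊(1 + p.1) / p.2⌋ : ℝ) + (⌊(1 + p.2) / p.1⌋ : ℝ)) / 2

/-- The Farey triangle Ω. -/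
def fareyTriangle : Set (ℝ × ℝ) :=
  {p | 0 < p.1 ∧ p.1 ≤ 1 ∧ 0 < p.2 ∧ p.2 ≤ 1 ∧ 1 < p.1 + p.2}

/-- An excursion of the BCZ map: points `p 0, …, p s` of Ω, consecutive under `T`,
with all intermediate x-coordinates larger than those of both endpoints. -/
def IsExcursion (p : ℕ → ℝ × ℝ) (s : ℕ) : Prop :=
  1 ≤ s ∧ (∀ i ≤ s, p i ∈ fareyTriangle) ∧
  (∀ i < s, p (i + 1) = bczT (p i)) ∧
  (∀ i, 0 < i → i < s → (p 0).1 < (p i).1 ∧ (p s).1 < (p i).1)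

/-- The golden ratio area Δ of the moduli space of excursions. -/
noncomputable def goldenArea : Set (ℝ × ℝ) :=
  {p | 0 < p.1 ∧ p.1 ≤ 1 ∧ 0 < p.2 ∧ p.2 ≤ 1 ∧
    (Real.sqrt 5 - 1) / 2 ≤ p.2 / p.1 ∧ p.2 / p.1 ≤ (Real.sqrt 5 + 1) / 2}

/-- `A_n = Σ_{k=1}^n φ(k)`, the number of Farey fractions in `(0,1]` of order `n`. -/
def fareyLen (n : ℕ) : ℕ := ∑ k ∈ Finset.Icc 1 n, Nat.totient k

open Finset

/-- The sum of `g` over the denominator pairs `(c, d)` with `c + d ≤ n` in the subtree rooted at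
`(a, b)` of the Stern–Brocot tree, in which the children of `(a, b)` are `(a, a + b)` and
`(a + b, b)`. A node stands for the mediant of two Farey neighbours and is encoded by their
denominators. -/
def sternBrocotSum {M : Type*} [AddCommMonoid M] (n : ℕ) (g : ℕ → ℕ → M) (a b : ℕ) : M :=
  if 0 < a ∧ 0 < b ∧ a + b ≤ n then
    g a b + sternBrocotSum n g a (a + b) + sternBrocotSum n g (a + b) b
  else 0
termination_by n + 1 - (a + b)

/-- The number of nodes `(c, d)` with `c + d ≤ n` in the Stern–Brocot subtree rooted at `(a, b)`,
that is, of Farey fractions of order `n` strictly between two neighbours with denominators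
`a, b`. -/
def sternBrocotSize (n a b : ℕ) : ℕ := sternBrocotSum n (fun _ _ ↦ 1) a b

/-- The internal path length of the Stern–Brocot subtree rooted at `(a, b)`, cut at `c + d ≤ n`:
the sum of the depths of its nodes, the root having depth `1`, computed as the sum of the sizes of
all its subtrees. -/
def sternBrocotPathLength (n a b : ℕ) : ℕ := sternBrocotSum n (sternBrocotSize n) a b

/-- The coprime pairs of positive integers with sum at most `n`, which are the nodes of the
Stern–Brocot tree cut at level `n`. -/
def coprimePairs (n : ℕ) : Finset (ℕ × ℕ) :=
  {p ∈ Icc 1 n ×ˢ Icc 1 n | p.1.Coprime p.2 ∧ p.1 + p.2 ≤ n}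

section SternBrocot

variable {M : Type*} {n a b : ℕ}

@[elab_as_elim]
theorem sternBrocot_induction {P : ℕ → ℕ → Prop}
    (leaf : ∀ a b, 0 < a → 0 < b → a ≤ n → b ≤ n → n < a + b → P a b)
    (node : ∀ a b, 0 < a → 0 < b → a + b ≤ n → P a (a + b) → P (a + b) b → P a b)
    {a b : ℕ} (ha : 0 < a) (hb : 0 < b) (han : a ≤ n) (hbn : b ≤ n) : P a b := by
  by_cases h : a + b ≤ n
  · exact node a b ha hb h (sternBrocot_induction leaf node ha (by omega) han h)
      (sternBrocot_induction leaf node (by omega) hb h hbn)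
  · exact leaf a b ha hb han hbn (by omega)
termination_by n + 1 - (a + b)

theorem sternBrocotSum_node [AddCommMonoid M] (g : ℕ → ℕ → M) (ha : 0 < a) (hb : 0 < b)
    (h : a + b ≤ n) :
    sternBrocotSum n g a b =
      g a b + sternBrocotSum n g a (a + b) + sternBrocotSum n g (a + b) b := by
  rw [sternBrocotSum, if_pos ⟨ha, hb, h⟩]

theorem sternBrocotSum_of_lt [AddCommMonoid M] (g : ℕ → ℕ → M) (h : n < a + b) :
    sternBrocotSum n g a b = 0 := by
  rw [sternBrocotSum, if_neg (by omega)]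

theorem sternBrocotSize_node (ha : 0 < a) (hb : 0 < b) (h : a + b ≤ n) :
    sternBrocotSize n a b = sternBrocotSize n a (a + b) + 1 + sternBrocotSize n (a + b) b := by
  simp only [sternBrocotSize]
  rw [sternBrocotSum_node _ ha hb h, add_comm 1]

theorem mem_coprimePairs {p : ℕ × ℕ} :
    p ∈ coprimePairs n ↔ 0 < p.1 ∧ 0 < p.2 ∧ p.1.Coprime p.2 ∧ p.1 + p.2 ≤ n := by
  simp only [coprimePairs, mem_filter, mem_product, mem_Icc]
  constructor
  · rintro ⟨⟨⟨h1, -⟩, h2, -⟩, hcop, hle⟩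
    exact ⟨h1, h2, hcop, hle⟩
  · rintro ⟨h1, h2, hcop, hle⟩
    exact ⟨⟨⟨h1, by omega⟩, h2, by omega⟩, hcop, hle⟩

theorem swap_mem_coprimePairs {p : ℕ × ℕ} : p.swap ∈ coprimePairs n ↔ p ∈ coprimePairs n := by
  simp only [mem_coprimePairs, Prod.fst_swap, Prod.snd_swap, Nat.coprime_comm, add_comm]
  tauto

theorem sum_coprimePairs_add_right [AddCommMonoid M] {F : ℕ → ℕ → M}
    (hF : ∀ a b, n < a + b → F a b = 0) :
    ∑ p ∈ coprimePairs n, F p.1 (p.1 + p.2) = ∑ p ∈ coprimePairs n with p.1 < p.2, F p.1 p.2 := by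
  symm
  refine sum_bij_ne_zero (fun p _ _ ↦ (p.1, p.2 - p.1)) ?_ ?_ ?_ ?_
  · rintro ⟨a, b⟩ h -
    simp only [mem_filter, mem_coprimePairs] at h ⊢
    obtain ⟨⟨ha, _, hcop, hle⟩, hlt⟩ := h
    exact ⟨ha, by omega, (Nat.coprime_sub_self_right hlt.le).2 hcop, by omega⟩
  · rintro ⟨a, b⟩ h - ⟨c, d⟩ h' - heq
    simp only [mem_filter, Prod.mk.injEq] at h h' heq ⊢
    omega
  · rintro ⟨a, b⟩ h hne
    obtain ⟨ha, hb, hcop, -⟩ := mem_coprimePairs.1 h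
    have hle : a + (a + b) ≤ n := not_lt.1 fun hlt ↦ hne (hF _ _ hlt)
    refine ⟨(a, a + b), ?_, hne, by simp⟩
    simp only [mem_filter, mem_coprimePairs, Nat.coprime_self_add_right]
    exact ⟨⟨ha, by omega, hcop, hle⟩, by omega⟩
  · rintro ⟨a, b⟩ h -
    simp only [mem_filter] at h
    simp only [Nat.add_sub_cancel' h.2.le]

theorem sum_coprimePairs_add_left [AddCommMonoid M] {F : ℕ → ℕ → M}
    (hF : ∀ a b, n < a + b → F a b = 0) :
    ∑ p ∈ coprimePairs n, F (p.1 + p.2) p.2 = ∑ p ∈ coprimePairs n with p.2 < p.1, F p.1 p.2 := by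
  have hswap := sum_coprimePairs_add_right (F := fun a b ↦ F b a)
    fun a b h ↦ hF b a (by rwa [add_comm])
  convert hswap using 1
  · exact sum_equiv (Equiv.prodComm ℕ ℕ) (fun p ↦ swap_mem_coprimePairs.symm)
      fun p _ ↦ by simp [add_comm]
  · exact sum_equiv (Equiv.prodComm ℕ ℕ)
      (fun p ↦ by simp [mem_filter, ← swap_mem_coprimePairs (p := p)]) fun p _ ↦ by simp

theorem sum_coprimePairs_eq_one_one_add [AddCommMonoid M] {F : ℕ → ℕ → M}
    (hF : n < 2 → F 1 1 = 0) :
    ∑ p ∈ coprimePairs n, F p.1 p.2 = F 1 1 + ∑ p ∈ coprimePairs n with p.1 < p.2, F p.1 p.2 +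
      ∑ p ∈ coprimePairs n with p.2 < p.1, F p.1 p.2 := by
  have hdiag : ∑ p ∈ coprimePairs n with p.1 = p.2, F p.1 p.2 = F 1 1 := by
    have hsub : {p ∈ coprimePairs n | p.1 = p.2} ⊆ {(1, 1)} := by
      rintro ⟨a, b⟩ h
      simp only [mem_filter, mem_coprimePairs] at h
      obtain ⟨⟨-, -, hcop, -⟩, rfl⟩ := h
      simp [(Nat.coprime_self a).1 hcop]
    rw [sum_subset hsub, sum_singleton]
    rintro p hp hnot
    obtain rfl := mem_singleton.1 hp
    exact hF (by simpa [mem_coprimePairs, one_add_one_eq_two] using hnot)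
  rw [← hdiag]
  simp only [sum_filter, ← sum_add_distrib]
  refine sum_congr rfl fun p _ ↦ ?_
  rcases lt_trichotomy p.1 p.2 with h | h | h
  · simp [h, h.ne, h.not_gt]
  · simp [h]
  · simp [h, h.ne', h.not_gt]

-- Both sides are obtained by evaluating the sum of all subtree sums over the coprime pairs: once
-- by the recursion at each root, once by sorting the roots into `(1, 1)`, left and right children.
theorem sternBrocotSum_one_one [AddCancelCommMonoid M] (n : ℕ) (g : ℕ → ℕ → M) :
    sternBrocotSum n g 1 1 = ∑ p ∈ coprimePairs n, g p.1 p.2 := by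
  have hzero : ∀ a b, n < a + b → sternBrocotSum n g a b = 0 := fun _ _ ↦ sternBrocotSum_of_lt g
  have hrec : ∑ p ∈ coprimePairs n, sternBrocotSum n g p.1 p.2 =
      ∑ p ∈ coprimePairs n, g p.1 p.2 +
        ∑ p ∈ coprimePairs n, sternBrocotSum n g p.1 (p.1 + p.2) +
        ∑ p ∈ coprimePairs n, sternBrocotSum n g (p.1 + p.2) p.2 := by
    rw [← sum_add_distrib, ← sum_add_distrib]
    refine sum_congr rfl fun p hp ↦ ?_
    obtain ⟨h1, h2, -, hle⟩ := mem_coprimePairs.1 hp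
    exact sternBrocotSum_node g h1 h2 hle
  rw [sum_coprimePairs_eq_one_one_add (hzero 1 1), sum_coprimePairs_add_right hzero,
    sum_coprimePairs_add_left hzero] at hrec
  exact add_right_cancel (add_right_cancel hrec)

theorem sternBrocotSize_add_one_le (ha : 0 < a) (hb : 0 < b) (han : a ≤ n) (hbn : b ≤ n) :
    (sternBrocotSize n a b : ℝ) + 1 ≤ (n : ℝ) ^ 2 / (a * b) := by
  refine sternBrocot_induction (fun a b ha hb han hbn h ↦ ?_) (fun a b ha hb h ihl ihr ↦ ?_)
    ha hb han hbn
  · rw [sternBrocotSize, sternBrocotSum_of_lt _ h, Nat.cast_zero, zero_add,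
      one_le_div (by positivity), sq]
    gcongr
  · have hsplit : (n : ℝ) ^ 2 / (a * b) =
        (n : ℝ) ^ 2 / (a * (a + b)) + (n : ℝ) ^ 2 / ((a + b) * b) := by
      field_simp
      ring
    rw [sternBrocotSize_node ha hb h, hsplit]
    push_cast at ihl ihr ⊢
    linarith

theorem sum_coprimePairs_inv_mul_le (n : ℕ) :
    ∑ p ∈ coprimePairs n, ((p.1 : ℝ) * p.2)⁻¹ ≤ (1 + Real.log n) ^ 2 := by
  have hharm : ∑ a ∈ Icc 1 n, (a : ℝ)⁻¹ ≤ 1 + Real.log n := by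
    simpa [harmonic_eq_sum_Icc] using harmonic_le_one_add_log n
  calc ∑ p ∈ coprimePairs n, ((p.1 : ℝ) * p.2)⁻¹
      ≤ ∑ p ∈ Icc 1 n ×ˢ Icc 1 n, ((p.1 : ℝ) * p.2)⁻¹ :=
        sum_le_sum_of_subset_of_nonneg (filter_subset _ _) fun p _ _ ↦ by positivity
    _ = (∑ a ∈ Icc 1 n, (a : ℝ)⁻¹) ^ 2 := by
        simp only [sq, sum_mul_sum, sum_product, mul_inv]
    _ ≤ (1 + Real.log n) ^ 2 := by gcongr

theorem sternBrocotPathLength_one_one_le (n : ℕ) :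
    (sternBrocotPathLength n 1 1 : ℝ) ≤ (n : ℝ) ^ 2 * (1 + Real.log n) ^ 2 :=
  calc (sternBrocotPathLength n 1 1 : ℝ)
      = ∑ p ∈ coprimePairs n, (sternBrocotSize n p.1 p.2 : ℝ) := by
        rw [sternBrocotPathLength, sternBrocotSum_one_one, Nat.cast_sum]
    _ ≤ ∑ p ∈ coprimePairs n, (n : ℝ) ^ 2 * ((p.1 : ℝ) * p.2)⁻¹ := by
        refine sum_le_sum fun p hp ↦ ?_
        obtain ⟨h1, h2, -, hle⟩ := mem_coprimePairs.1 hp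
        rw [← div_eq_mul_inv]
        linarith [sternBrocotSize_add_one_le (n := n) h1 h2 (by omega) (by omega)]
    _ ≤ (n : ℝ) ^ 2 * (1 + Real.log n) ^ 2 := by
        rw [← mul_sum]
        gcongr
        exact sum_coprimePairs_inv_mul_le n

end SternBrocot

section FareyLen

variable {n : ℕ}

theorem card_coprimePairs_filter_add_eq {k : ℕ} (hk : 2 ≤ k) (hkn : k ≤ n) :
    #{p ∈ coprimePairs n | p.1 + p.2 = k} = k.totient := by
  rw [Nat.totient_eq_card_coprime]
  refine card_nbij' Prod.fst (fun a ↦ (a, k - a)) ?_ ?_ ?_ ?_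
  · rintro ⟨a, b⟩ h
    simp only [mem_coe, mem_filter, mem_coprimePairs, mem_range] at h ⊢
    obtain ⟨⟨-, hb, hcop, -⟩, rfl⟩ := h
    exact ⟨by omega, by simpa [Nat.coprime_comm] using hcop⟩
  · intro a h
    simp only [mem_coe, mem_filter, mem_coprimePairs, mem_range] at h ⊢
    obtain ⟨hlt, hcop⟩ := h
    have ha : 0 < a := Nat.pos_of_ne_zero fun h0 ↦ by
      rw [h0, Nat.coprime_zero_right] at hcop
      omega
    exact ⟨⟨ha, by omega, (Nat.coprime_sub_self_right hlt.le).2 hcop.symm, by omega⟩, by omega⟩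
  · rintro ⟨a, b⟩ h
    simp only [mem_coe, mem_filter] at h
    simp [← h.2]
  · intro a _
    rfl

theorem card_coprimePairs_add_one (hn : 1 ≤ n) : #(coprimePairs n) + 1 = fareyLen n := by
  have hmaps : Set.MapsTo (fun p : ℕ × ℕ ↦ p.1 + p.2) (coprimePairs n) (Icc 2 n) := by
    intro p hp
    obtain ⟨h1, h2, -, hle⟩ := mem_coprimePairs.1 (mem_coe.1 hp)
    simp only [coe_Icc, Set.mem_Icc]
    omega
  have hcard : #(coprimePairs n) = ∑ k ∈ Icc 2 n, k.totient := by
    rw [card_eq_sum_card_fiberwise hmaps]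
    refine sum_congr rfl fun k hk ↦ ?_
    obtain ⟨h2k, hkn⟩ := mem_Icc.1 hk
    exact card_coprimePairs_filter_add_eq h2k hkn
  rw [fareyLen, ← insert_Icc_add_one_left_eq_Icc hn, sum_insert (by simp), Nat.totient_one, hcard,
    one_add_one_eq_two, add_comm]

theorem sternBrocotSize_one_one_add_one (hn : 1 ≤ n) :
    sternBrocotSize n 1 1 + 1 = fareyLen n := by
  rw [← card_coprimePairs_add_one hn, sternBrocotSize, sternBrocotSum_one_one, card_eq_sum_ones]

theorem fareyLen_pos (hn : 1 ≤ n) : 0 < fareyLen n := by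
  rw [← card_coprimePairs_add_one hn]
  exact Nat.succ_pos _

theorem sum_Ioc_totient_mul_div (n : ℕ) :
    ∑ d ∈ Ioc 0 n, d.totient * (n / d) = ∑ k ∈ Ioc 0 n, k := by
  let φ : ArithmeticFunction ℕ := ⟨Nat.totient, Nat.totient_zero⟩
  have h := ArithmeticFunction.sum_Ioc_mul_zeta_eq_sum φ n
  rw [ArithmeticFunction.natCoe_nat] at h
  exact h.symm.trans
    (sum_congr rfl fun k _ ↦ ArithmeticFunction.mul_zeta_apply.trans k.sum_totient)

-- In `∑ φ(d) ⌊n / d⌋ = n (n + 1) / 2`, the terms with `4 d ≤ n` contribute at most `n² / 4`, and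
-- the others at most `3 φ(d)` each.
theorem sq_le_twelve_mul_fareyLen (n : ℕ) : n ^ 2 ≤ 12 * fareyLen n := by
  have hterm : ∀ d ∈ Ioc 0 n,
      d.totient * (n / d) ≤ 3 * d.totient + if d ∈ Ioc 0 (n / 4) then n else 0 := by
    intro d hd
    split_ifs with hsmall
    · calc d.totient * (n / d) ≤ d * (n / d) := Nat.mul_le_mul_right _ d.totient_le
        _ ≤ n := Nat.mul_div_le n d
        _ ≤ 3 * d.totient + n := Nat.le_add_left _ _
    · rw [mem_Ioc] at hd hsmall
      have hdiv : n / d ≤ 3 := Nat.lt_succ_iff.1 ((Nat.div_lt_iff_lt_mul hd.1).2 (by omega))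
      linarith [Nat.mul_le_mul_left d.totient hdiv]
  have hsmall : ∑ d ∈ Ioc 0 n, (if d ∈ Ioc 0 (n / 4) then n else 0) ≤ n / 4 * n := by
    rw [← sum_filter, sum_const, smul_eq_mul]
    gcongr
    calc #{d ∈ Ioc 0 n | d ∈ Ioc 0 (n / 4)} ≤ #(Ioc 0 (n / 4)) :=
          card_le_card fun d hd ↦ (mem_filter.1 hd).2
      _ = n / 4 := by simp
  have hgauss : (∑ k ∈ Ioc 0 n, k) * 2 = (n + 1) * n := by
    simpa [Nat.range_succ_eq_Icc_zero, ← sum_Ioc_add_eq_sum_Icc n.zero_le] using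
      sum_range_id_mul_two (n + 1)
  have hsum : ∑ k ∈ Ioc 0 n, k ≤ 3 * fareyLen n + n / 4 * n := by
    calc ∑ k ∈ Ioc 0 n, k = ∑ d ∈ Ioc 0 n, d.totient * (n / d) :=
          (sum_Ioc_totient_mul_div n).symm
      _ ≤ 3 * ∑ d ∈ Ioc 0 n, d.totient +
            ∑ d ∈ Ioc 0 n, if d ∈ Ioc 0 (n / 4) then n else 0 := by
          rw [mul_sum, ← sum_add_distrib]
          exact sum_le_sum hterm
      _ ≤ 3 * fareyLen n + n / 4 * n := Nat.add_le_add_left hsmall _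
  have hquarter : n / 4 * 4 ≤ n := Nat.div_mul_le_self n 4
  nlinarith

end FareyLen

/-- The BCZ map in integer coordinates: if `a, b` are the denominators of consecutive Farey
fractions of order `n`, then `fareyStep n (a, b)` is the next pair of consecutive denominators. The
subtraction does not truncate when `1 ≤ b ≤ n`, see `le_add_div_mul_self`. -/
def fareyStep (n : ℕ) (p : ℕ × ℕ) : ℕ × ℕ := (p.2, (n + p.1) / p.2 * p.2 - p.1)

/-- The function `2 (k̂ - 3)` in integer coordinates; the factor `2` makes it integer-valued. -/
def fareyDefect (n : ℕ) (p : ℕ × ℕ) : ℤ :=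
  ((n + p.1) / p.2 : ℕ) + ((n + p.2) / p.1 : ℕ) - 6

/-- The point `(a / n, b / n)` of the Farey triangle, whose BCZ orbit is described by the orbit of
`(a, b)` under `fareyStep n`. -/
noncomputable def fareyPoint (n : ℕ) (p : ℕ × ℕ) : ℝ × ℝ := ((p.1 : ℝ) / n, (p.2 : ℝ) / n)

/-- The denominator adjacent to `a` among the Farey fractions of order `n` in an arc between two
Farey neighbours with denominators `a, b`, namely the largest integer `≤ n` congruent to `b` modulo
`a` (for `b ≤ n`). The fraction of denominator `a` may be either end of the arc. -/
def adjDenom (n a b : ℕ) : ℕ := b + a * ((n - b) / a)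

/-- The sum of `fareyDefect n` over the pairs of consecutive denominators of the Farey fractions of
order `n` in an arc between two Farey neighbours with denominators `a, b`, in the closed form that
`birkhoffSum_fareyDefect_arc` justifies. -/
def arcDefect (n a b : ℕ) : ℤ :=
  ((n + b) / a : ℕ) - ((n - b) / a : ℕ) + ((n + a) / b : ℕ) - ((n - a) / b : ℕ) - 6

section Arc

variable {n a b : ℕ}

theorem sub_div_eq_sub_add_div_add_one (ha : 0 < a) (h : a + b ≤ n) :
    (n - b) / a = (n - (a + b)) / a + 1 := by
  rw [Nat.div_eq_sub_div ha (by omega), Nat.sub_sub, add_comm b]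

theorem adjDenom_self_add (ha : 0 < a) (h : a + b ≤ n) :
    adjDenom n a (a + b) = adjDenom n a b := by
  rw [adjDenom, adjDenom, sub_div_eq_sub_add_div_add_one ha h]
  ring

theorem fareyStep_mediant (ha : 0 < a) (h : a + b ≤ n) :
    fareyStep n (adjDenom n (a + b) a, a + b) = (a + b, adjDenom n (a + b) b) := by
  simp only [fareyStep, adjDenom, Prod.mk.injEq, true_and]
  have hnum : n + (a + (a + b) * ((n - a) / (a + b))) =
      (n - b) + (a + b) * ((n - a) / (a + b) + 1) := by
    rw [mul_add]
    omega
  have hprod : ((n - b) / (a + b) + ((n - a) / (a + b) + 1)) * (a + b) =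
      (b + (a + b) * ((n - b) / (a + b))) + (a + (a + b) * ((n - a) / (a + b))) := by
    ring
  rw [hnum, Nat.add_mul_div_left _ _ (by omega), hprod, Nat.add_sub_cancel]

theorem arcDefect_comm (n a b : ℕ) : arcDefect n a b = arcDefect n b a := by
  simp only [arcDefect]
  ring

theorem arcDefect_eq_add (ha : 0 < a) (hb : 0 < b) (h : a + b ≤ n) :
    arcDefect n a b = arcDefect n a (a + b) + arcDefect n (a + b) b := by
  have hsub_a : (n - b) / a = (n - (a + b)) / a + 1 := sub_div_eq_sub_add_div_add_one ha h
  have hsub_b : (n - a) / b = (n - (a + b)) / b + 1 := by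
    rw [sub_div_eq_sub_add_div_add_one hb (by omega), add_comm b]
  have hadd_a : (n + (a + b)) / a = (n + b) / a + 1 := by
    rw [← Nat.add_div_right _ ha, add_assoc, add_comm b]
  have hadd_b : (n + (a + b)) / b = (n + a) / b + 1 := by
    rw [← Nat.add_div_right _ hb, add_assoc]
  have hmed_a : (n + a) / (a + b) = (n - b) / (a + b) + 1 := by
    rw [← Nat.add_div_right _ (by omega)]
    congr 1
    omega
  have hmed_b : (n + b) / (a + b) = (n - a) / (a + b) + 1 := by
    rw [← Nat.add_div_right _ (by omega)]
    congr 1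
    omega
  simp only [arcDefect, hsub_a, hsub_b, hadd_a, hadd_b, hmed_a, hmed_b]
  push_cast
  ring

theorem add_div_le_sub_div_add {m c : ℕ} (ha : 0 < a) (hm : m ≤ n) (h : 2 * m ≤ c * a) :
    (n + m) / a ≤ (n - m) / a + c := by
  rw [← Nat.add_mul_div_right _ _ ha]
  exact Nat.div_le_div_right (by omega)

theorem abs_arcDefect_le (ha : 0 < a) (hab : a ≤ b) (hba : b ≤ 2 * a) (hbn : b ≤ n) :
    |arcDefect n a b| ≤ 6 := by
  have hb_le := add_div_le_sub_div_add (c := 4) ha hbn (by omega)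
  have ha_le := add_div_le_sub_div_add (n := n) (m := a) (a := b) (c := 2) (by omega) (by omega)
    (by omega)
  have hb_ge : (n - b) / a ≤ (n + b) / a := Nat.div_le_div_right (by omega)
  have ha_ge : (n - a) / b ≤ (n + a) / b := Nat.div_le_div_right (by omega)
  rw [arcDefect, abs_le]
  omega

-- One of the two halves of an arc has ends whose ratio lies in `[1, 2]`, so its defect is small:
-- the partial sum at the mediant is close to one of the two partial sums at the ends.
theorem abs_add_arcDefect_mediant_le (ha : 0 < a) (hb : 0 < b) (h : a + b ≤ n) {s D : ℤ}
    (hs : |s| ≤ D) (hsD : |s + arcDefect n a b| ≤ D) : |s + arcDefect n a (a + b)| ≤ D + 6 := by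
  rcases le_total b a with hba | hab
  · have hleft : |arcDefect n a (a + b)| ≤ 6 := abs_arcDefect_le ha (by omega) (by omega) h
    linarith [abs_add_le s (arcDefect n a (a + b))]
  · have hright : |arcDefect n (a + b) b| ≤ 6 := by
      rw [arcDefect_comm]
      exact abs_arcDefect_le hb (by omega) (by omega) h
    have heq : s + arcDefect n a (a + b) = s + arcDefect n a b - arcDefect n (a + b) b := by
      rw [arcDefect_eq_add ha hb h]
      ring
    rw [heq]
    linarith [abs_sub (s + arcDefect n a b) (arcDefect n (a + b) b)]

theorem iterate_fareyStep_arc (ha : 0 < a) (hb : 0 < b) (han : a ≤ n) (hbn : b ≤ n) :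
    (fareyStep n)^[sternBrocotSize n a b] (a, adjDenom n a b) = (adjDenom n b a, b) := by
  refine sternBrocot_induction (fun a b _ _ han hbn h ↦ ?_) (fun a b ha hb h ihl ihr ↦ ?_)
    ha hb han hbn
  · have hba : (n - b) / a = 0 := Nat.div_eq_of_lt (by omega)
    have hab : (n - a) / b = 0 := Nat.div_eq_of_lt (by omega)
    simp [sternBrocotSize, sternBrocotSum_of_lt _ h, adjDenom, hba, hab]
  · rw [adjDenom_self_add ha h] at ihl
    rw [add_comm a b, adjDenom_self_add hb (by omega), add_comm b a] at ihr
    rw [sternBrocotSize_node ha hb h, add_comm, Function.iterate_add_apply,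
      Function.iterate_succ_apply', ihl, fareyStep_mediant ha h, ihr]

theorem iterate_fareyStep_left_arc (ha : 0 < a) (hb : 0 < b) (h : a + b ≤ n) :
    (fareyStep n)^[sternBrocotSize n a (a + b) + 1] (a, adjDenom n a b) =
      (a + b, adjDenom n (a + b) b) := by
  rw [Function.iterate_succ_apply', ← adjDenom_self_add ha h,
    iterate_fareyStep_arc ha (by omega) (by omega) h, fareyStep_mediant ha h]

theorem birkhoffSum_fareyDefect_arc (ha : 0 < a) (hb : 0 < b) (han : a ≤ n) (hbn : b ≤ n) :
    birkhoffSum (fareyStep n) (fareyDefect n) (sternBrocotSize n a b + 1) (a, adjDenom n a b) =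
      arcDefect n a b := by
  refine sternBrocot_induction (fun a b _ _ han hbn h ↦ ?_) (fun a b ha hb h ihl ihr ↦ ?_)
    ha hb han hbn
  · have hba : (n - b) / a = 0 := Nat.div_eq_of_lt (by omega)
    have hab : (n - a) / b = 0 := Nat.div_eq_of_lt (by omega)
    rw [sternBrocotSize, sternBrocotSum_of_lt _ h, zero_add, birkhoffSum_one]
    simp only [fareyDefect, adjDenom, arcDefect, hba, hab, mul_zero, add_zero]
    push_cast
    ring
  · rw [adjDenom_self_add ha h] at ihl
    rw [sternBrocotSize_node ha hb h, add_assoc, birkhoffSum_add, ihl,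
      iterate_fareyStep_left_arc ha hb h, ihr, arcDefect_eq_add ha hb h]

theorem birkhoffSum_fareyDefect_left_arc (ha : 0 < a) (h : a + b ≤ n) :
    birkhoffSum (fareyStep n) (fareyDefect n) (sternBrocotSize n a (a + b) + 1)
      (a, adjDenom n a b) = arcDefect n a (a + b) := by
  rw [← adjDenom_self_add ha h]
  exact birkhoffSum_fareyDefect_arc ha (by omega) (by omega) h

-- Each level of the tree worsens the bound `D` for the partial sums at the ends of the arc by `6`.
theorem sum_abs_add_birkhoffSum_arc_le (ha : 0 < a) (hb : 0 < b) (han : a ≤ n) (hbn : b ≤ n) :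
    ∀ s D : ℤ, |s| ≤ D → |s + arcDefect n a b| ≤ D →
      ∑ i ∈ range (sternBrocotSize n a b),
        |s + birkhoffSum (fareyStep n) (fareyDefect n) (i + 1) (a, adjDenom n a b)| ≤
      D * sternBrocotSize n a b + 6 * sternBrocotPathLength n a b := by
  refine sternBrocot_induction (fun a b _ _ _ _ h ↦ ?_) (fun a b ha hb h ihl ihr ↦ ?_)
    ha hb han hbn
  · intros
    simp [sternBrocotSize, sternBrocotPathLength, sternBrocotSum_of_lt _ h]
  · intro s D hs hsD
    have hmed : |s + arcDefect n a (a + b)| ≤ D + 6 := abs_add_arcDefect_mediant_le ha hb h hs hsD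
    have hleft := ihl s (D + 6) (by linarith) hmed
    have hright := ihr _ _ hmed (by rw [add_assoc, ← arcDefect_eq_add ha hb h]; linarith)
    have hshift (i : ℕ) : s + birkhoffSum (fareyStep n) (fareyDefect n)
          (sternBrocotSize n a (a + b) + 1 + i + 1) (a, adjDenom n a b) =
        s + arcDefect n a (a + b) + birkhoffSum (fareyStep n) (fareyDefect n) (i + 1)
          (a + b, adjDenom n (a + b) b) := by
      rw [add_assoc _ i, birkhoffSum_add, iterate_fareyStep_left_arc ha hb h,
        birkhoffSum_fareyDefect_left_arc ha h, add_assoc s]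
    have hpath : sternBrocotPathLength n a b = sternBrocotSize n a b +
        sternBrocotPathLength n a (a + b) + sternBrocotPathLength n (a + b) b :=
      sternBrocotSum_node _ ha hb h
    rw [adjDenom_self_add ha h] at hleft
    rw [hpath, sternBrocotSize_node ha hb h, sum_range_add, sum_range_succ,
      birkhoffSum_fareyDefect_left_arc ha h]
    simp only [hshift]
    push_cast
    linarith

theorem sum_abs_birkhoffSum_fareyDefect_le (hn : 1 ≤ n) :
    ∑ i ∈ Icc 1 (fareyLen n), |birkhoffSum (fareyStep n) (fareyDefect n) i (1, n)| ≤
      2 * (fareyLen n : ℤ) + 6 * sternBrocotPathLength n 1 1 := by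
  have hadj : adjDenom n 1 1 = n := by
    rw [adjDenom, Nat.div_one]
    omega
  have hdefect : arcDefect n 1 1 = -2 := by
    simp only [arcDefect, Nat.div_one]
    omega
  have hreindex (f : ℕ → ℤ) (m : ℕ) : ∑ i ∈ Icc 1 m, f i = ∑ i ∈ range m, f (i + 1) := by
    rw [range_eq_Ico, sum_Ico_add', zero_add, Ico_add_one_right_eq_Icc]
  have htotal := birkhoffSum_fareyDefect_arc one_pos one_pos hn hn
  have hpartial := sum_abs_add_birkhoffSum_arc_le one_pos one_pos hn hn 0 2
    (by norm_num) (by norm_num [hdefect])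
  simp only [hadj, hdefect, zero_add] at htotal hpartial
  rw [hreindex, ← sternBrocotSize_one_one_add_one hn,
    sum_range_succ, htotal]
  push_cast
  norm_num
  linarith

end Arc

section BCZ

variable {n : ℕ} {p : ℕ × ℕ}

theorem le_add_div_mul_self {b : ℕ} (a : ℕ) (hb : b ∈ Set.Icc 1 n) : a ≤ (n + a) / b * b := by
  have hlt : n + a < (n + a) / b * b + b := Nat.lt_div_mul_add hb.1
  have hbn : b ≤ n := hb.2
  omega

theorem snd_fareyStep_mem_Icc (hp : p.2 ∈ Set.Icc 1 n) : (fareyStep n p).2 ∈ Set.Icc 1 n := by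
  have hlt : n + p.1 < (n + p.1) / p.2 * p.2 + p.2 := Nat.lt_div_mul_add hp.1
  have hle : (n + p.1) / p.2 * p.2 ≤ n + p.1 := Nat.div_mul_le_self _ _
  have hpn : p.2 ≤ n := hp.2
  simp only [fareyStep, Set.mem_Icc]
  omega

theorem floor_one_add_div_div (hn : 0 < n) (a b : ℕ) :
    ⌊(1 + (a : ℝ) / n) / ((b : ℝ) / n)⌋ = (((n + a) / b : ℕ) : ℤ) := by
  have hn' : (n : ℝ) ≠ 0 := by positivity
  rw [one_add_div hn', div_div_div_cancel_right₀ hn', ← Nat.cast_add,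
    ← Int.natCast_floor_eq_floor (by positivity), Nat.floor_div_eq_div]

theorem bczT_fareyPoint (hp : p.2 ∈ Set.Icc 1 n) :
    bczT (fareyPoint n p) = fareyPoint n (fareyStep n p) := by
  have hn : 0 < n := hp.1.trans hp.2
  simp only [bczT, fareyPoint, fareyStep, floor_one_add_div_div hn, Int.cast_natCast,
    Nat.cast_sub (le_add_div_mul_self p.1 hp), Nat.cast_mul, sub_div, mul_div_assoc]

theorem khat_fareyPoint_sub_three (hn : 0 < n) (p : ℕ × ℕ) :
    khat (fareyPoint n p) - 3 = (fareyDefect n p : ℝ) / 2 := by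
  simp only [khat, fareyPoint, fareyDefect, floor_one_add_div_div hn]
  push_cast
  ring

theorem birkhoffSum_bczT_fareyPoint (i : ℕ) (hp : p.2 ∈ Set.Icc 1 n) :
    birkhoffSum bczT (khat · - 3) i (fareyPoint n p) =
      ((birkhoffSum (fareyStep n) (fareyDefect n) i p : ℤ) : ℝ) / 2 := by
  induction i generalizing p with
  | zero => simp
  | succ i ih =>
    rw [birkhoffSum_succ', birkhoffSum_succ', bczT_fareyPoint hp, ih (snd_fareyStep_mem_Icc hp),
      khat_fareyPoint_sub_three (hp.1.trans hp.2)]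
    push_cast
    ring

theorem sum_abs_birkhoffSum_bczT_le (hn : 1 ≤ n) :
    ∑ i ∈ Icc 1 (fareyLen n), |birkhoffSum bczT (khat · - 3) i (1 / (n : ℝ), 1)| ≤
      fareyLen n + 3 * (sternBrocotPathLength n 1 1 : ℝ) := by
  have hstart : ((1 : ℝ) / n, (1 : ℝ)) = fareyPoint n (1, n) := by
    have hn' : (n : ℝ) ≠ 0 := by positivity
    simp [fareyPoint, div_self hn']
  have hint : (∑ i ∈ Icc 1 (fareyLen n),
      |((birkhoffSum (fareyStep n) (fareyDefect n) i (1, n) : ℤ) : ℝ)|) ≤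
      2 * (fareyLen n : ℝ) + 6 * sternBrocotPathLength n 1 1 := by
    exact_mod_cast sum_abs_birkhoffSum_fareyDefect_le hn
  simp only [hstart, birkhoffSum_bczT_fareyPoint _ (show (1, n).2 ∈ Set.Icc 1 n from ⟨hn, le_rfl⟩),
    abs_div, abs_two, ← sum_div]
  linarith

end BCZ

theorem one_add_log_sq_le {x ε : ℝ} (hx : 1 ≤ x) (hε : 0 < ε) :
    (1 + Real.log x) ^ 2 ≤ (1 + 2 / ε) ^ 2 * x ^ ε := by
  have hlog : Real.log x ≤ 2 / ε * x ^ (ε / 2) := by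
    convert Real.log_le_rpow_div (zero_le_one.trans hx) (half_pos hε) using 1
    field_simp
  have hone : 1 ≤ x ^ (ε / 2) := Real.one_le_rpow hx (half_pos hε).le
  calc (1 + Real.log x) ^ 2 ≤ ((1 + 2 / ε) * x ^ (ε / 2)) ^ 2 := by
        have := Real.log_nonneg hx
        gcongr
        linarith
    _ = (1 + 2 / ε) ^ 2 * x ^ ε := by
        rw [mul_pow, ← Real.rpow_mul_natCast (by positivity), Nat.cast_two,
          div_mul_cancel₀ _ two_ne_zero]

theorem discretized_analog_RH_general (n : ℕ) (hn : 1 ≤ n) :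
    (1 / (fareyLen n : ℝ)) *
      ∑ i ∈ Icc 1 (fareyLen n),
        |∑ j ∈ range i, (khat (bczT^[j] (1 / (n : ℝ), 1)) - 3)| ≤
      37 * (1 + Real.log n) ^ 2 := by
  have hsq : (n : ℝ) ^ 2 ≤ 12 * fareyLen n := by exact_mod_cast sq_le_twelve_mul_fareyLen n
  have hA : (0 : ℝ) < fareyLen n := by exact_mod_cast fareyLen_pos hn
  have hone : 1 ≤ (1 + Real.log n) ^ 2 :=
    one_le_pow₀ (le_add_of_nonneg_right (Real.log_natCast_nonneg n))
  rw [one_div, inv_mul_le_iff₀ hA]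
  calc _ ≤ fareyLen n + 3 * (sternBrocotPathLength n 1 1 : ℝ) := sum_abs_birkhoffSum_bczT_le hn
    _ ≤ fareyLen n * (1 + Real.log n) ^ 2 + 3 * (12 * fareyLen n * (1 + Real.log n) ^ 2) := by
        gcongr
        · exact le_mul_of_one_le_right hA.le hone
        · exact (sternBrocotPathLength_one_one_le n).trans (by gcongr)
    _ = fareyLen n * (37 * (1 + Real.log n) ^ 2) := by ring

theorem discretized_analog_RH (ε : ℝ) (hε : 0 < ε) :
    ∃ C : ℝ, 0 < C ∧ ∀ n : ℕ, 1 ≤ n →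
      (1 / (fareyLen n : ℝ)) *
        ∑ i ∈ Finset.Icc 1 (fareyLen n),
          |∑ j ∈ Finset.range i, (khat (bczT^[j] (1 / (n : ℝ), 1)) - 3)| ≤
        C * (n : ℝ) ^ ε := by
  refine ⟨37 * (1 + 2 / ε) ^ 2, by positivity, fun n hn ↦ ?_⟩
  rw [mul_assoc]
  exact (discretized_analog_RH_general n hn).trans
    (by gcongr; exact one_add_log_sq_le (by exact_mod_cast hn) hε)
end

section
/- For every real e > 1 there exists a constant C > 0 such that for every excursion ((a_i,b_i))_{i=0}^{s} of the BCZ map with (a_0, a_s) ∈ Δ, one has Σ_{i=1}^{s} |Σ_{j=0}^{i−1} (k̂(a_j,b_j) − 3)| ≤ C · (1/(a_0·a_s))^{e}. -/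
/-! The first coordinates `a` along an excursion look like the denominators of a Farey interval:
splitting at the minimum of the interior, where `a m = a l + a r`, builds a Stern–Brocot tree over
the index interval. Up to an error caused by the floors at the two ends of the excursion, the
partial sums of `k̂ - 3` change by `±1` when passing to a subtree, so the energy of a tree exceeds
that of its two halves by `O(r - l)`, and `r - l ≤ 1 / (a l * a r)`. Hence the energy is controlled
by any potential `Φ` with `Φ(u, u + w) + Φ(u + w, w) + 1 / (u w) ≤ Φ(u, w)`. For `w ≤ u`, the
summand `(1 / u ^ 2 + 1 / w ^ 2) (u w) ^ (-δ)` of `Φ` loses at least a multiple of `1 / (u w)` when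
passing to `(u + w, w)`, and a large multiple of `(u w) ^ (-1 - δ)` absorbs its value at
`(u, u + w)`. -/

section Potential

variable {δ t u w x y c : ℝ}

theorem one_add_half_mul_le_one_add_rpow (hδ : 0 ≤ δ) (ht : 0 ≤ t) (ht1 : t ≤ 1) :
    1 + δ * t / 2 ≤ (1 + t) ^ δ := by
  have half_le_log : t / 2 ≤ Real.log (1 + t) := by
    refine le_trans ?_ (Real.le_log_one_add_of_nonneg ht)
    rw [div_le_div_iff₀ two_pos (by positivity)]
    nlinarith
  calc 1 + δ * t / 2 ≤ Real.log (1 + t) * δ + 1 := by nlinarith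
    _ ≤ Real.exp (Real.log (1 + t) * δ) := Real.add_one_le_exp _
    _ = (1 + t) ^ δ := (Real.rpow_def_of_pos (by positivity) δ).symm

theorem mul_le_one_sub_one_add_rpow_inv (hδ : 0 ≤ δ) (ht : 0 ≤ t) (ht1 : t ≤ 1) :
    δ / (2 + δ) * t ≤ 1 - ((1 + t) ^ δ)⁻¹ := by
  have h : ((1 + t) ^ δ)⁻¹ ≤ (1 + δ * t / 2)⁻¹ :=
    inv_anti₀ (by positivity) (one_add_half_mul_le_one_add_rpow hδ ht ht1)
  have hrat : 1 - (1 + δ * t / 2)⁻¹ = δ * t / (2 + δ * t) := by field_simp; ring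
  have hden : δ / (2 + δ) * t ≤ δ * t / (2 + δ * t) := by
    rw [div_mul_eq_mul_div]
    gcongr
    nlinarith
  linarith

theorem rpow_add_one_add_rpow_add_one_le (hδ : 0 ≤ δ) (hx : 0 < x) (hxy : x ≤ y) :
    (1 + δ / 2) * x ^ (δ + 1) + y ^ (δ + 1) ≤ (x + y) ^ (δ + 1) := by
  have hy : 0 < y := hx.trans_le hxy
  have hx_pow : (1 + δ / 2) * x ^ δ ≤ (x + y) ^ δ := calc
    (1 + δ / 2) * x ^ δ ≤ 2 ^ δ * x ^ δ := by
      have h := one_add_half_mul_le_one_add_rpow hδ zero_le_one le_rfl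
      rw [mul_one, one_add_one_eq_two] at h
      gcongr
    _ = (2 * x) ^ δ := (Real.mul_rpow zero_le_two hx.le).symm
    _ ≤ (x + y) ^ δ := by gcongr; linarith
  have hy_pow : y ^ δ ≤ (x + y) ^ δ := by gcongr; linarith
  rw [Real.rpow_add_one hx.ne', Real.rpow_add_one hy.ne', Real.rpow_add_one (by positivity)]
  nlinarith

/-- The part `(u w) ^ (-1 - δ)` of the potential; superadditivity of `x ↦ x ^ (1 + δ)` gives it a
gain under the splitting `(u, w) ↦ (u, u + w), (u + w, w)`. -/
noncomputable def prodWeight (δ u w : ℝ) : ℝ := (1 / (u * w)) ^ (δ + 1)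

/-- The part `(1 / u ^ 2 + 1 / w ^ 2) (u w) ^ (-δ)` of the potential; it dominates `prodWeight`
when `u / w` is far from `1`. -/
noncomputable def sqWeight (δ u w : ℝ) : ℝ := (1 / u ^ 2 + 1 / w ^ 2) * (1 / (u * w)) ^ δ

/-- The potential controlling the energy of an excursion with end values `u` and `w`. The factors
make its drop under splitting at least `1 / (u w)`. -/
noncomputable def potential (δ u w : ℝ) : ℝ :=
  (2 + δ) / δ * (6 / δ * prodWeight δ u w + sqWeight δ u w)

theorem potential_comm (δ u w : ℝ) : potential δ u w = potential δ w u := by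
  simp only [potential, prodWeight, sqWeight, mul_comm u w, add_comm (1 / u ^ 2)]

theorem potential_nonneg (hδ : 0 < δ) (hu : 0 < u) (hw : 0 < w) : 0 ≤ potential δ u w := by
  unfold potential prodWeight sqWeight
  positivity

theorem sqWeight_eq (hu : 0 < u) (hw : 0 < w) :
    sqWeight δ u w = (u ^ 2 + w ^ 2) / (u * w) * prodWeight δ u w := by
  rw [sqWeight, prodWeight, Real.rpow_add_one (by positivity)]
  field_simp
  ring

theorem sqWeight_le_mul_prodWeight (hu : 0 < u) (hw : 0 < w) (h : u ^ 2 + w ^ 2 ≤ c * (u * w)) :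
    sqWeight δ u w ≤ c * prodWeight δ u w := by
  rw [sqWeight_eq hu hw]
  exact mul_le_mul_of_nonneg_right ((div_le_iff₀ (by positivity)).2 h)
    (by unfold prodWeight; positivity)

theorem two_mul_prodWeight_le_sqWeight (hu : 0 < u) (hw : 0 < w) :
    2 * prodWeight δ u w ≤ sqWeight δ u w := by
  rw [sqWeight_eq hu hw]
  refine mul_le_mul_of_nonneg_right ((le_div_iff₀ (by positivity)).2 ?_)
    (by unfold prodWeight; positivity)
  linarith [two_mul_le_add_sq u w]

theorem prodWeight_add_le (hδ : 0 ≤ δ) (hw : 0 < w) (hwu : w ≤ u) :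
    (1 + δ / 2) * prodWeight δ u (u + w) + prodWeight δ (u + w) w ≤ prodWeight δ u w := by
  have hu : 0 < u := hw.trans_le hwu
  have split : 1 / (u * w) = 1 / (u * (u + w)) + 1 / ((u + w) * w) := by field_simp; ring
  rw [prodWeight, prodWeight, prodWeight, split]
  refine rpow_add_one_add_rpow_add_one_le hδ (by positivity)
    (one_div_le_one_div_of_le (by positivity) ?_)
  nlinarith

theorem sqWeight_add_left_add_le (hδ : 0 ≤ δ) (hw : 0 < w) (hwu : w ≤ u) (huw : u * w ≤ 1) :
    sqWeight δ (u + w) w + δ / (2 + δ) * (1 / (u * w)) ≤ sqWeight δ u w := by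
  have hu : 0 < u := hw.trans_le hwu
  set P := (1 / (u * w)) ^ δ with hP
  set q := ((1 + w / u) ^ δ)⁻¹ with hq
  have one_le_P : 1 ≤ P := Real.one_le_rpow ((le_div_iff₀ (by positivity)).2 (by linarith)) hδ
  have q_nonneg : 0 ≤ q := by positivity
  have drop : δ / (2 + δ) * (w / u) ≤ 1 - q :=
    mul_le_one_sub_one_add_rpow_inv hδ (by positivity) ((div_le_one hu).2 hwu)
  have q_le_one : q ≤ 1 := by
    have : 0 ≤ δ / (2 + δ) * (w / u) := by positivity
    linarith
  have pow_eq : (1 / ((u + w) * w)) ^ δ = P * q := by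
    rw [hP, hq, ← Real.inv_rpow (by positivity), ← Real.mul_rpow (by positivity) (by positivity)]
    congr 1
    field_simp
  have thick : 1 / (u + w) ^ 2 * (P * q) ≤ 1 / u ^ 2 * P := by
    refine mul_le_mul (by gcongr; linarith) (mul_le_of_le_one_right (by positivity) q_le_one)
      (mul_nonneg (by positivity) q_nonneg) (by positivity)
  have thin : δ / (2 + δ) * (1 / (u * w)) ≤ 1 / w ^ 2 * P * (1 - q) := calc
    δ / (2 + δ) * (1 / (u * w)) = 1 / w ^ 2 * 1 * (δ / (2 + δ) * (w / u)) := by field_simp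
    _ ≤ 1 / w ^ 2 * P * (1 - q) := by gcongr
  rw [sqWeight, sqWeight, pow_eq, ← hP]
  linarith

theorem potential_add_le_of_le (hδ : 0 < δ) (hw : 0 < w) (hwu : w ≤ u) (huw : u * w ≤ 1) :
    potential δ u (u + w) + potential δ (u + w) w + 1 / (u * w) ≤ potential δ u w := by
  have hu : 0 < u := hw.trans_le hwu
  have sq_drop := sqWeight_add_left_add_le hδ.le hw hwu huw
  have sq_le : sqWeight δ u (u + w) ≤ 3 * prodWeight δ u (u + w) :=
    sqWeight_le_mul_prodWeight hu (by positivity) (by nlinarith)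
  have prod_drop : 6 / δ * prodWeight δ u (u + w) + 3 * prodWeight δ u (u + w) +
      6 / δ * prodWeight δ (u + w) w ≤ 6 / δ * prodWeight δ u w := by
    have h := mul_le_mul_of_nonneg_left (prodWeight_add_le hδ.le hw hwu)
      (show 0 ≤ 6 / δ by positivity)
    refine le_trans (le_of_eq ?_) h
    field_simp
    ring
  calc potential δ u (u + w) + potential δ (u + w) w + 1 / (u * w)
      = (2 + δ) / δ * (6 / δ * prodWeight δ u (u + w) + sqWeight δ u (u + w) +
          (6 / δ * prodWeight δ (u + w) w + sqWeight δ (u + w) w) +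
          δ / (2 + δ) * (1 / (u * w))) := by
        unfold potential
        field_simp
    _ ≤ potential δ u w := by
        refine mul_le_mul_of_nonneg_left ?_ (by positivity)
        linarith

theorem potential_add_le (hδ : 0 < δ) (hu : 0 < u) (hw : 0 < w) (huw : u * w ≤ 1) :
    potential δ u (u + w) + potential δ (u + w) w + 1 / (u * w) ≤ potential δ u w := by
  rcases le_total w u with h | h
  · exact potential_add_le_of_le hδ hw h huw
  · have swapped := potential_add_le_of_le hδ hu h (by linarith)
    rw [add_comm u, mul_comm u, potential_comm δ u (w + u), potential_comm δ (w + u) w,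
      potential_comm δ u w]
    linarith

theorem potential_le_mul_sqWeight (hδ : 0 < δ) (hu : 0 < u) (hw : 0 < w) :
    potential δ u w ≤ (2 + δ) / δ * (3 / δ + 1) * sqWeight δ u w := by
  have h := mul_le_mul_of_nonneg_left (two_mul_prodWeight_le_sqWeight (δ := δ) hu hw)
    (show 0 ≤ 3 / δ by positivity)
  rw [potential, mul_assoc]
  gcongr
  calc 6 / δ * prodWeight δ u w + sqWeight δ u w
      = 3 / δ * (2 * prodWeight δ u w) + sqWeight δ u w := by ring
    _ ≤ (3 / δ + 1) * sqWeight δ u w := by linarith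

end Potential

/-- The index `(a (j - 1) + a (j + 1)) / a j` of the `j`-th term. For the first coordinates of a BCZ
orbit this is the integer `k`. It is meant for `0 < j`. -/
noncomputable def fareyIndex (a : ℕ → ℝ) (j : ℕ) : ℝ := (a (j - 1) + a (j + 1)) / a j

/-- The contribution to the index at `l` of the terms strictly between `l` and `r`. In a
Stern–Brocot tree over `[l, r]` it is the depth of the leftmost leaf. -/
noncomputable def leftDepth (a : ℕ → ℝ) (l r : ℕ) : ℝ := (a (l + 1) - a r) / a l

/-- The contribution to the index at `r` of the terms strictly between `l` and `r`. In a
Stern–Brocot tree over `[l, r]` it is the depth of the rightmost leaf. -/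
noncomputable def rightDepth (a : ℕ → ℝ) (l r : ℕ) : ℝ := (a (r - 1) - a l) / a r

/-- The partial sum of `k̂ - 3` over the steps from `l` to `i`, with the index at the left end `l`
replaced by twice `leftDepth`, so that only terms inside `[l, r]` count. -/
noncomputable def discrepancy (a : ℕ → ℝ) (l r i : ℕ) : ℝ :=
  leftDepth a l r + ∑ j ∈ Finset.Ico (l + 1) i, fareyIndex a j + fareyIndex a i / 2 -
    3 * ((i : ℝ) - l)

/-- The sum of the absolute discrepancies in the interior of `[l, r]`. -/
noncomputable def energy (a : ℕ → ℝ) (l r : ℕ) : ℝ :=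
  ∑ i ∈ Finset.Ico (l + 1) r, |discrepancy a l r i|

/-- Consecutive values of `a` on `[l, r]` form points of the Farey triangle. -/
def IsFareyChain (a : ℕ → ℝ) (l r : ℕ) : Prop :=
  ∀ i, l ≤ i → i < r → (a i, a (i + 1)) ∈ fareyTriangle

/-- `[l, r]` carries a Stern–Brocot tree: it is obtained from unit intervals by repeatedly joining
two intervals at a point `m` where the value of `a` is the sum of the values at the outer ends. -/
inductive SternBrocot (a : ℕ → ℝ) : ℕ → ℕ → Prop
  | leaf (i : ℕ) : SternBrocot a i (i + 1)
  | node {l m r : ℕ} : SternBrocot a l m → SternBrocot a m r → a m = a l + a r → SternBrocot a l r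

section Splitting

variable {a : ℕ → ℝ} {l m r : ℕ}

theorem leftDepth_eq_add_one (hl : a l ≠ 0) (hm : a m = a l + a r) :
    leftDepth a l r = leftDepth a l m + 1 := by
  rw [leftDepth, leftDepth, hm]
  field_simp
  ring

theorem rightDepth_eq_add_one (hr : a r ≠ 0) (hm : a m = a l + a r) :
    rightDepth a l r = rightDepth a m r + 1 := by
  rw [rightDepth, rightDepth, hm]
  field_simp
  ring

theorem fareyIndex_eq_rightDepth_add_leftDepth_add (hm : a m ≠ 0) :
    fareyIndex a m = rightDepth a l m + leftDepth a m r + (a l + a r) / a m := by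
  rw [fareyIndex, rightDepth, leftDepth]
  field_simp
  ring

theorem fareyIndex_eq_add_one (hm0 : a m ≠ 0) (hm : a m = a l + a r) :
    fareyIndex a m = rightDepth a l m + leftDepth a m r + 1 := by
  rw [fareyIndex_eq_rightDepth_add_leftDepth_add (l := l) (r := r) hm0, ← hm, div_self hm0]

theorem sum_Ico_succ_split (f : ℕ → ℝ) (hlm : l < m) (hmr : m < r) :
    ∑ j ∈ Finset.Ico (l + 1) r, f j =
      ∑ j ∈ Finset.Ico (l + 1) m, f j + f m + ∑ j ∈ Finset.Ico (m + 1) r, f j := by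
  rw [← Finset.sum_Ico_consecutive f hlm hmr.le, Finset.sum_eq_sum_Ico_succ_bot hmr, add_assoc]

theorem sum_Ico_succ_le_add_mul {f g : ℕ → ℝ} {c : ℝ} (hlr : l < r)
    (h : ∀ i ∈ Finset.Ico (l + 1) r, f i ≤ g i + c) :
    ∑ i ∈ Finset.Ico (l + 1) r, f i ≤ ∑ i ∈ Finset.Ico (l + 1) r, g i + ((r : ℝ) - l - 1) * c := by
  refine (Finset.sum_le_sum h).trans_eq ?_
  rw [Finset.sum_add_distrib, Finset.sum_const, Nat.card_Ico, nsmul_eq_mul, Nat.cast_sub hlr,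
    Nat.cast_succ, sub_sub]

end Splitting

namespace IsFareyChain

variable {a : ℕ → ℝ} {l r l' r' i : ℕ}

theorem mono (h : IsFareyChain a l r) (hl : l ≤ l') (hr : r' ≤ r) : IsFareyChain a l' r' :=
  fun i hli hir => h i (hl.trans hli) (hir.trans_le hr)

theorem mem_Ioc (h : IsFareyChain a l r) (hlr : l < r) (hli : l ≤ i) (hir : i ≤ r) :
    a i ∈ Set.Ioc 0 1 := by
  rcases hir.lt_or_eq with hir | rfl
  · exact ⟨(h i hli hir).1, (h i hli hir).2.1⟩
  · obtain ⟨j, rfl⟩ := Nat.exists_eq_add_one_of_ne_zero (Nat.ne_zero_of_lt hlr)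
    obtain ⟨-, -, hpos, hle, -⟩ := h j (by omega) (by omega)
    exact ⟨hpos, hle⟩

theorem one_lt_add (h : IsFareyChain a l r) (hli : l ≤ i) (hir : i < r) : 1 < a i + a (i + 1) :=
  (h i hli hir).2.2.2.2

theorem one_lt_pred_add (h : IsFareyChain a l r) (hli : l < i) (hir : i ≤ r) :
    1 < a (i - 1) + a i := by
  simpa only [Nat.sub_add_cancel (Nat.one_le_of_lt hli)] using
    h.one_lt_add (i := i - 1) (by omega) (by omega)

end IsFareyChain

theorem exists_rightmost_min_image {α β : Type*} [LinearOrder α] [LinearOrder β] (t : Finset α)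
    (f : α → β) (ht : t.Nonempty) :
    ∃ m ∈ t, (∀ i ∈ t, f m ≤ f i) ∧ ∀ i ∈ t, m < i → f m < f i := by
  obtain ⟨m, hm, hmin⟩ := t.exists_min_image (fun i ↦ toLex (f i, OrderDual.toDual i)) ht
  have hlex : ∀ i ∈ t, f m < f i ∨ f m = f i ∧ i ≤ m := fun i hi ↦
    Prod.Lex.toLex_le_toLex.1 (hmin i hi)
  refine ⟨m, hm, fun i hi ↦ (hlex i hi).elim le_of_lt (fun h ↦ h.1.le), fun i hi hmi ↦ ?_⟩
  exact (hlex i hi).resolve_right fun h ↦ hmi.not_ge h.2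

theorem eq_one_of_add_eq_int_mul {x y z : ℝ} {k : ℤ} (hx : 0 < x) (hy : 0 < y) (hxz : x < z)
    (hyz : y ≤ z) (h : x + y = k * z) : k = 1 := by
  have hz : 0 < z := hx.trans hxz
  have k_pos : (0 : ℝ) < k := pos_of_mul_pos_left (h ▸ add_pos hx hy) hz.le
  have k_lt_two : (k : ℝ) < 2 := lt_of_mul_lt_mul_right (by linarith) hz.le
  have : 0 < k := by exact_mod_cast k_pos
  have : k < 2 := by exact_mod_cast k_lt_two
  omega

namespace SternBrocot

variable {a : ℕ → ℝ} {l m r i : ℕ}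

theorem lt (h : SternBrocot a l r) : l < r := by
  induction h with
  | leaf i => exact i.lt_succ_self
  | node _ _ _ hlm hmr => exact hlm.trans hmr

theorem exists_nat_eq_leftDepth (h : SternBrocot a l r) (hl : 0 < a l) :
    ∃ n : ℕ, leftDepth a l r = n := by
  induction h with
  | leaf i => exact ⟨0, by simp [leftDepth]⟩
  | node _ _ hm ihl _ =>
    obtain ⟨n, hn⟩ := ihl hl
    exact ⟨n + 1, by rw [leftDepth_eq_add_one hl.ne' hm, hn, Nat.cast_succ]⟩

theorem exists_nat_eq_rightDepth (h : SternBrocot a l r) (hr : 0 < a r) :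
    ∃ n : ℕ, rightDepth a l r = n := by
  induction h with
  | leaf i => exact ⟨0, by simp [rightDepth]⟩
  | node _ _ hm _ ihr =>
    obtain ⟨n, hn⟩ := ihr hr
    exact ⟨n + 1, by rw [rightDepth_eq_add_one hr.ne' hm, hn, Nat.cast_succ]⟩

theorem exists_int_mul_eq_add (hL : SternBrocot a l m) (hR : SternBrocot a m r) (hm : 0 < a m)
    (hint : ∃ k : ℤ, fareyIndex a m = k) : ∃ k : ℤ, a l + a r = k * a m := by
  obtain ⟨x, hx⟩ := hL.exists_nat_eq_rightDepth hm
  obtain ⟨y, hy⟩ := hR.exists_nat_eq_leftDepth hm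
  obtain ⟨k, hk⟩ := hint
  have h := fareyIndex_eq_rightDepth_add_leftDepth_add (l := l) (r := r) hm.ne'
  refine ⟨k - x - y, (div_eq_iff hm.ne').1 ?_⟩
  push_cast
  linarith

theorem leftDepth_add_sum_add_rightDepth (h : SternBrocot a l r) (hl : 0 < a l) (hr : 0 < a r) :
    leftDepth a l r + ∑ j ∈ Finset.Ico (l + 1) r, fareyIndex a j + rightDepth a l r =
      3 * ((r : ℝ) - l - 1) := by
  induction h with
  | leaf i => simp [leftDepth, rightDepth]
  | @node l m r hL hR hm ihl ihr =>
    have hm0 : 0 < a m := by linarith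
    rw [sum_Ico_succ_split _ hL.lt hR.lt, leftDepth_eq_add_one hl.ne' hm,
      rightDepth_eq_add_one hr.ne' hm, fareyIndex_eq_add_one hm0.ne' hm]
    linarith [ihl hl hm0, ihr hm0 hr]

theorem length_le (h : SternBrocot a l r) (hΩ : IsFareyChain a l r) :
    (r : ℝ) - l ≤ 1 / (a l * a r) := by
  induction h with
  | leaf i =>
    obtain ⟨hpos, hle, hpos', hle', -⟩ := hΩ i le_rfl i.lt_succ_self
    rw [le_div_iff₀ (mul_pos hpos hpos'), Nat.cast_succ, add_sub_cancel_left, one_mul]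
    exact mul_le_one₀ hle hpos'.le hle'
  | @node l m r hL hR hm ihl ihr =>
    have hlr := hL.lt.trans hR.lt
    have hl := (hΩ.mem_Ioc hlr le_rfl hlr.le).1
    have hr := (hΩ.mem_Ioc hlr hlr.le le_rfl).1
    have hlen := add_le_add (ihl (hΩ.mono le_rfl hR.lt.le)) (ihr (hΩ.mono hL.lt.le le_rfl))
    calc (r : ℝ) - l = m - l + (r - m) := by ring
      _ ≤ 1 / (a l * a m) + 1 / (a m * a r) := hlen
      _ = 1 / (a l * a r) := by rw [hm]; field_simp; ring

/- Strictness on the left only, with the split at the rightmost minimum, makes the hypothesis pass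
to both halves even if the minimum is attained several times. -/
theorem of_lt_of_le {l r : ℕ} (hlr : l < r)
    (hpos : ∀ i, l ≤ i → i ≤ r → 0 < a i)
    (hint : ∀ i, l < i → i < r → ∃ k : ℤ, fareyIndex a i = k)
    (hlt : ∀ i, l < i → i < r → a l < a i) (hle : ∀ i, l < i → i < r → a r ≤ a i) :
    SternBrocot a l r := by
  rcases (Nat.succ_le_of_lt hlr).eq_or_lt with rfl | hlr'
  · exact .leaf l
  obtain ⟨m, hm, hmin, hright⟩ := exists_rightmost_min_image (Finset.Ioo l r) a
    ⟨l + 1, Finset.mem_Ioo.2 ⟨l.lt_succ_self, hlr'⟩⟩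
  simp only [Finset.mem_Ioo, and_imp] at hm hmin hright
  obtain ⟨hlm, hmr⟩ := hm
  have hL : SternBrocot a l m := of_lt_of_le hlm
    (fun i hli him ↦ hpos i hli (him.trans hmr.le)) (fun i hli him ↦ hint i hli (him.trans hmr))
    (fun i hli him ↦ hlt i hli (him.trans hmr)) (fun i hli him ↦ hmin i hli (him.trans hmr))
  have hR : SternBrocot a m r := of_lt_of_le hmr
    (fun i hmi hir ↦ hpos i (hlm.le.trans hmi) hir) (fun i hmi hir ↦ hint i (hlm.trans hmi) hir)
    (fun i hmi hir ↦ hright i (hlm.trans hmi) hir hmi) (fun i hmi hir ↦ hle i (hlm.trans hmi) hir)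
  obtain ⟨k, hk⟩ := hL.exists_int_mul_eq_add hR (hpos m hlm.le hmr.le) (hint m hlm hmr)
  obtain rfl : k = 1 := eq_one_of_add_eq_int_mul (hpos l le_rfl hlr.le) (hpos r hlr.le le_rfl)
    (hlt m hlm hmr) (hle m hlm hmr) hk
  exact .node hL hR (by rw [hk, Int.cast_one, one_mul])
termination_by r - l

end SternBrocot

section Energy

variable {a : ℕ → ℝ} {l m r i : ℕ}

theorem discrepancy_eq_left_add_one (hl : a l ≠ 0) (hm : a m = a l + a r) :
    discrepancy a l r i = discrepancy a l m i + 1 := by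
  rw [discrepancy, discrepancy, leftDepth_eq_add_one hl hm]
  ring

theorem discrepancy_eq_right_sub_one (hL : SternBrocot a l m) (hl : 0 < a l) (hm0 : 0 < a m)
    (hm : a m = a l + a r) (hmi : m < i) : discrepancy a l r i = discrepancy a m r i - 1 := by
  rw [discrepancy, discrepancy, sum_Ico_succ_split _ hL.lt hmi, leftDepth_eq_add_one hl.ne' hm,
    fareyIndex_eq_add_one hm0.ne' hm]
  linarith [hL.leftDepth_add_sum_add_rightDepth hl hm0]

theorem discrepancy_split_eq (hL : SternBrocot a l m) (hl : 0 < a l) (hm0 : 0 < a m)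
    (hm : a m = a l + a r) :
    discrepancy a l r m = (leftDepth a m r - rightDepth a l m - 3) / 2 := by
  rw [discrepancy, leftDepth_eq_add_one hl.ne' hm, fareyIndex_eq_add_one hm0.ne' hm]
  linarith [hL.leftDepth_add_sum_add_rightDepth hl hm0]

theorem abs_leftDepth_sub_rightDepth_le (hΩ : IsFareyChain a l r) (hlm : l < m) (hmr : m < r)
    (hm : a m = a l + a r) : |leftDepth a m r - rightDepth a l m| ≤ 2 := by
  have hlr := hlm.trans hmr
  have hl := hΩ.mem_Ioc hlr le_rfl hlr.le
  have hr := hΩ.mem_Ioc hlr hlr.le le_rfl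
  have hm0 := hΩ.mem_Ioc hlr hlm.le hmr.le
  have hpred := hΩ.mem_Ioc hlr (i := m - 1) (by omega) (by omega)
  have hsucc := hΩ.mem_Ioc hlr (i := m + 1) (by omega) (by omega)
  have gap_pred := hΩ.one_lt_pred_add hlm hmr.le
  have gap_succ := hΩ.one_lt_add hlm.le hmr
  rw [leftDepth, rightDepth, ← sub_div, abs_div, abs_of_pos hm0.1, div_le_iff₀ hm0.1, abs_le]
  constructor <;> linarith [hl.1, hr.1, hpred.2, hsucc.2]

theorem energy_le_add (hL : SternBrocot a l m) (hR : SternBrocot a m r) (hm : a m = a l + a r)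
    (hΩ : IsFareyChain a l r) :
    energy a l r ≤ energy a l m + energy a m r + 2 * (1 / (a l * a r)) := by
  have hlm := hL.lt
  have hmr := hR.lt
  have hl := (hΩ.mem_Ioc (hlm.trans hmr) le_rfl (hlm.trans hmr).le).1
  have hm0 := (hΩ.mem_Ioc (hlm.trans hmr) hlm.le hmr.le).1
  have left : ∑ i ∈ Finset.Ico (l + 1) m, |discrepancy a l r i| ≤
      energy a l m + ((m : ℝ) - l - 1) * 1 := by
    refine sum_Ico_succ_le_add_mul hlm fun i _ ↦ ?_
    rw [discrepancy_eq_left_add_one hl.ne' hm]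
    exact (abs_add_le _ _).trans_eq (by rw [abs_one])
  have right : ∑ i ∈ Finset.Ico (m + 1) r, |discrepancy a l r i| ≤
      energy a m r + ((r : ℝ) - m - 1) * 1 := by
    refine sum_Ico_succ_le_add_mul hmr fun i hi ↦ ?_
    rw [discrepancy_eq_right_sub_one hL hl hm0 hm (Finset.mem_Ico.1 hi).1]
    exact (abs_sub _ _).trans_eq (by rw [abs_one])
  have middle : |discrepancy a l r m| ≤ 5 / 2 := by
    have h := abs_le.1 (abs_leftDepth_sub_rightDepth_le hΩ hlm hmr hm)
    rw [discrepancy_split_eq hL hl hm0 hm, abs_le]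
    constructor <;> linarith
  have length := (SternBrocot.node hL hR hm).length_le hΩ
  have one_le_length : (l : ℝ) + 1 ≤ r := by exact_mod_cast hlm.trans hmr
  rw [energy, sum_Ico_succ_split _ hlm hmr]
  linarith

theorem energy_le_potential {δ : ℝ} (hδ : 0 < δ) (h : SternBrocot a l r)
    (hΩ : IsFareyChain a l r) : energy a l r ≤ 2 * potential δ (a l) (a r) := by
  induction h with
  | leaf i =>
    obtain ⟨hpos, -, hpos', -⟩ := hΩ i le_rfl i.lt_succ_self
    simpa [energy] using potential_nonneg hδ hpos hpos'
  | @node l m r hL hR hm ihl ihr =>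
    have hlr := hL.lt.trans hR.lt
    obtain ⟨hl, hl1⟩ := hΩ.mem_Ioc hlr le_rfl hlr.le
    obtain ⟨hr, hr1⟩ := hΩ.mem_Ioc hlr hlr.le le_rfl
    have drop := potential_add_le hδ hl hr (mul_le_one₀ hl1 hr.le hr1)
    rw [← hm] at drop
    linarith [energy_le_add hL hR hm hΩ, ihl (hΩ.mono le_rfl hR.lt.le),
      ihr (hΩ.mono hL.lt.le le_rfl)]

end Energy

theorem floor_one_add_div_eq {x y z : ℝ} {k : ℤ} (hy : 0 < y) (hx : x ≤ 1) (hxy : 1 < x + y)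
    (h : x + z = k * y) : ⌊(1 + z) / y⌋ = k := by
  rw [Int.floor_eq_iff, le_div_iff₀ hy, div_lt_iff₀ hy]
  constructor <;> linarith

theorem abs_half_floor_sub_div_le {u v z : ℝ} (hu : 0 < u) (hz : 0 ≤ z) (hv : v ≤ 1)
    (huv : 1 < u + v) : |(⌊(1 + v) / u⌋ : ℝ) / 2 - (v - z) / u| ≤ 1 + z / u := by
  have floor_le := Int.floor_le ((1 + v) / u)
  have lt_floor := Int.lt_floor_add_one ((1 + v) / u)
  have split : (1 + v) / u / 2 - (v - z) / u = (1 - v) / u / 2 + z / u := by field_simp; ring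
  have hnonneg : 0 ≤ (1 - v) / u := div_nonneg (by linarith) hu.le
  have hle : (1 - v) / u ≤ 1 := by rw [div_le_one hu]; linarith
  have hzu : 0 ≤ z / u := div_nonneg hz hu.le
  rw [abs_le]
  constructor <;> linarith

namespace IsFareyChain

variable {a : ℕ → ℝ} {l r s i : ℕ}

theorem floor_pred_eq_fareyIndex (hΩ : IsFareyChain a l r) (hli : l < i) (hir : i < r)
    (hint : ∃ k : ℤ, fareyIndex a i = k) : (⌊(1 + a (i - 1)) / a i⌋ : ℝ) = fareyIndex a i := by
  obtain ⟨k, hk⟩ := hint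
  obtain ⟨hpos, -, -, hle, hgap⟩ := hΩ i hli.le hir
  have hsum : a (i + 1) + a (i - 1) = k * a i := by
    rw [← hk, fareyIndex, div_mul_cancel₀ _ hpos.ne', add_comm]
  rw [hk, floor_one_add_div_eq hpos hle (by linarith) hsum]

theorem floor_succ_eq_fareyIndex (hΩ : IsFareyChain a l r) (hli : l < i) (hir : i < r)
    (hint : ∃ k : ℤ, fareyIndex a i = k) : (⌊(1 + a (i + 1)) / a i⌋ : ℝ) = fareyIndex a i := by
  obtain ⟨k, hk⟩ := hint
  have hpos := (hΩ i hli.le hir).1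
  have hle := (hΩ.mem_Ioc (hli.trans hir) (i := i - 1) (by omega) (by omega)).2
  have hsum : a (i - 1) + a (i + 1) = k * a i := by
    rw [← hk, fareyIndex, div_mul_cancel₀ _ hpos.ne']
  rw [hk, floor_one_add_div_eq hpos hle (hΩ.one_lt_pred_add hli hir.le) hsum]

theorem abs_half_floor_sub_leftDepth_le (hΩ : IsFareyChain a l r) (hlr : l < r) :
    |(⌊(1 + a (l + 1)) / a l⌋ : ℝ) / 2 - leftDepth a l r| ≤ 1 + a r / a l :=
  abs_half_floor_sub_div_le (hΩ.mem_Ioc hlr le_rfl hlr.le).1 (hΩ.mem_Ioc hlr hlr.le le_rfl).1.le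
    (hΩ.mem_Ioc hlr l.le_succ hlr).2 (hΩ.one_lt_add le_rfl hlr)

theorem abs_half_floor_sub_rightDepth_le (hΩ : IsFareyChain a l r) (hlr : l < r) :
    |(⌊(1 + a (r - 1)) / a r⌋ : ℝ) / 2 - rightDepth a l r| ≤ 1 + a l / a r :=
  abs_half_floor_sub_div_le (hΩ.mem_Ioc hlr hlr.le le_rfl).1 (hΩ.mem_Ioc hlr le_rfl hlr.le).1.le
    (hΩ.mem_Ioc hlr (Nat.le_sub_one_of_lt hlr) (Nat.sub_le r 1)).2
    (by linarith [hΩ.one_lt_pred_add hlr le_rfl])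

theorem sum_khat_sub_three (hΩ : IsFareyChain a 0 s)
    (hint : ∀ i, 0 < i → i < s → ∃ k : ℤ, fareyIndex a i = k) (h0 : 0 < i) (hi : i ≤ s) :
    ∑ j ∈ Finset.range i, (khat (a j, a (j + 1)) - 3) =
      (⌊(1 + a 1) / a 0⌋ : ℝ) / 2 + ∑ j ∈ Finset.Ico 1 i, fareyIndex a j +
        (⌊(1 + a (i - 1)) / a i⌋ : ℝ) / 2 - 3 * i := by
  induction i, h0 using Nat.le_induction with
  | base => simp [khat]; ring
  | succ i h0 ih =>
    rw [Finset.sum_range_succ, ih (by omega), Finset.sum_Ico_succ_top h0, khat,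
      hΩ.floor_pred_eq_fareyIndex h0 hi (hint i h0 hi),
      hΩ.floor_succ_eq_fareyIndex h0 hi (hint i h0 hi), Nat.cast_succ, Nat.add_sub_cancel]
    ring

theorem abs_sum_khat_sub_three_le (hΩ : IsFareyChain a 0 s)
    (hint : ∀ i, 0 < i → i < s → ∃ k : ℤ, fareyIndex a i = k) (h0 : 0 < i) (hi : i < s) :
    |∑ j ∈ Finset.range i, (khat (a j, a (j + 1)) - 3)| ≤
      |discrepancy a 0 s i| + (1 + a s / a 0) := by
  calc |∑ j ∈ Finset.range i, (khat (a j, a (j + 1)) - 3)|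
      = |discrepancy a 0 s i + ((⌊(1 + a 1) / a 0⌋ : ℝ) / 2 - leftDepth a 0 s)| := by
        rw [hΩ.sum_khat_sub_three hint h0 hi.le,
          hΩ.floor_pred_eq_fareyIndex h0 hi (hint i h0 hi), discrepancy, zero_add, Nat.cast_zero]
        ring_nf
    _ ≤ |discrepancy a 0 s i| + (1 + a s / a 0) :=
        (abs_add_le _ _).trans
          (add_le_add_right (hΩ.abs_half_floor_sub_leftDepth_le (h0.trans hi)) _)

theorem abs_total_sum_khat_sub_three_le (hΩ : IsFareyChain a 0 s) (h : SternBrocot a 0 s)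
    (hint : ∀ i, 0 < i → i < s → ∃ k : ℤ, fareyIndex a i = k) :
    |∑ j ∈ Finset.range s, (khat (a j, a (j + 1)) - 3)| ≤ 5 + a s / a 0 + a 0 / a s := by
  have hs := h.lt
  have left_end := abs_le.1 (hΩ.abs_half_floor_sub_leftDepth_le hs)
  have right_end := abs_le.1 (hΩ.abs_half_floor_sub_rightDepth_le hs)
  have total := h.leftDepth_add_sum_add_rightDepth (hΩ.mem_Ioc hs le_rfl hs.le).1
    (hΩ.mem_Ioc hs hs.le le_rfl).1
  rw [zero_add, Nat.cast_zero] at total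
  rw [zero_add] at left_end
  rw [hΩ.sum_khat_sub_three hint hs le_rfl, abs_le]
  constructor <;> linarith

theorem sum_abs_sum_khat_sub_three_le (hΩ : IsFareyChain a 0 s) (h : SternBrocot a 0 s)
    (hint : ∀ i, 0 < i → i < s → ∃ k : ℤ, fareyIndex a i = k) :
    ∑ i ∈ Finset.Icc 1 s, |∑ j ∈ Finset.range i, (khat (a j, a (j + 1)) - 3)| ≤
      energy a 0 s + 4 * (1 / a 0 ^ 2 + 1 / a s ^ 2) := by
  have hs := h.lt
  obtain ⟨h0, h01⟩ := hΩ.mem_Ioc hs le_rfl hs.le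
  obtain ⟨hs0, hs1⟩ := hΩ.mem_Ioc hs hs.le le_rfl
  have interior : ∑ i ∈ Finset.Ico 1 s, |∑ j ∈ Finset.range i, (khat (a j, a (j + 1)) - 3)| ≤
      energy a 0 s + ((s : ℝ) - (0 : ℕ) - 1) * (1 + a s / a 0) :=
    sum_Ico_succ_le_add_mul hs fun i hi ↦
      hΩ.abs_sum_khat_sub_three_le hint (Finset.mem_Ico.1 hi).1 (Finset.mem_Ico.1 hi).2
  rw [Nat.cast_zero, sub_zero] at interior
  have length : (s : ℝ) * (1 + a s / a 0) ≤ 1 / (a 0 * a s) + 1 / a 0 ^ 2 := calc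
    (s : ℝ) * (1 + a s / a 0) ≤ 1 / (a 0 * a s) * (1 + a s / a 0) := by
      gcongr
      simpa using h.length_le hΩ
    _ = 1 / (a 0 * a s) + 1 / a 0 ^ 2 := by field_simp
  have amgm : 2 * (1 / (a 0 * a s)) ≤ 1 / a 0 ^ 2 + 1 / a s ^ 2 := by
    calc 2 * (1 / (a 0 * a s)) = 2 * (1 / a 0) * (1 / a s) := by field_simp
      _ ≤ (1 / a 0) ^ 2 + (1 / a s) ^ 2 := two_mul_le_add_sq _ _
      _ = 1 / a 0 ^ 2 + 1 / a s ^ 2 := by rw [one_div_pow, one_div_pow]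
  have ratio_le : a 0 / a s ≤ 1 / a s ^ 2 := by
    rw [div_le_div_iff₀ hs0 (by positivity)]
    nlinarith
  have one_le_sq : 1 ≤ 1 / a 0 ^ 2 := one_le_one_div (by positivity) (pow_le_one₀ h0.le h01)
  have one_le_sq' : 1 ≤ 1 / a s ^ 2 := one_le_one_div (by positivity) (pow_le_one₀ hs0.le hs1)
  rw [← Finset.Ico_add_one_right_eq_Icc, Finset.sum_Ico_succ_top hs]
  linarith [hΩ.abs_total_sum_khat_sub_three_le h hint]

end IsFareyChain

namespace IsExcursion

variable {p : ℕ → ℝ × ℝ} {s i : ℕ}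

theorem eq_mk_fst_succ (h : IsExcursion p s) (hi : i < s) : p i = ((p i).1, (p (i + 1)).1) := by
  rw [h.2.2.1 i hi, bczT]

theorem isFareyChain (h : IsExcursion p s) : IsFareyChain (fun i ↦ (p i).1) 0 s := fun i _ hi ↦
  h.eq_mk_fst_succ hi ▸ h.2.1 i hi.le

theorem exists_int_eq_fareyIndex (h : IsExcursion p s) (h0 : 0 < i) (hi : i < s) :
    ∃ k : ℤ, fareyIndex (fun i ↦ (p i).1) i = k := by
  obtain ⟨j, rfl⟩ := Nat.exists_eq_add_one_of_ne_zero h0.ne'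
  have hsnd : (p j).2 = (p (j + 1)).1 := congrArg Prod.snd (h.eq_mk_fst_succ (by omega))
  have hsucc : (p (j + 2)).1 = ⌊(1 + (p j).1) / (p j).2⌋ * (p j).2 - (p j).1 := by
    rw [h.2.2.1 (j + 1) hi, h.2.2.1 j (by omega), bczT, bczT]
  have hpos : 0 < (p (j + 1)).1 := (h.2.1 (j + 1) hi.le).1
  refine ⟨⌊(1 + (p j).1) / (p j).2⌋, (div_eq_iff hpos.ne').2 ?_⟩
  change (p j).1 + (p (j + 2)).1 = _ * (p (j + 1)).1
  rw [← hsnd, hsucc, add_sub_cancel]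

theorem sternBrocot (h : IsExcursion p s) : SternBrocot (fun i ↦ (p i).1) 0 s :=
  .of_lt_of_le h.1 (fun i _ hi ↦ (h.2.1 i hi).1) (fun _ h0 hi ↦ h.exists_int_eq_fareyIndex h0 hi)
    (fun i h0 hi ↦ (h.2.2.2 i h0 hi).1) (fun i h0 hi ↦ (h.2.2.2 i h0 hi).2.le)

theorem sum_abs_sum_khat_sub_three_le (h : IsExcursion p s) :
    ∑ i ∈ Finset.Icc 1 s, |∑ j ∈ Finset.range i, (khat (p j) - 3)| ≤
      energy (fun i ↦ (p i).1) 0 s + 4 * (1 / (p 0).1 ^ 2 + 1 / (p s).1 ^ 2) := by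
  have khat_eq : ∀ i ∈ Finset.Icc 1 s, ∑ j ∈ Finset.range i, (khat (p j) - 3) =
      ∑ j ∈ Finset.range i, (khat ((p j).1, (p (j + 1)).1) - 3) := fun i hi ↦
    Finset.sum_congr rfl fun j hj ↦ by
      rw [← h.eq_mk_fst_succ ((Finset.mem_range.1 hj).trans_le (Finset.mem_Icc.1 hi).2)]
  rw [Finset.sum_congr rfl fun i hi ↦ congrArg abs (khat_eq i hi)]
  exact h.isFareyChain.sum_abs_sum_khat_sub_three_le h.sternBrocot
    fun _ ↦ h.exists_int_eq_fareyIndex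

end IsExcursion

theorem sq_add_sq_le_of_mem_goldenArea {u w : ℝ} (h : (u, w) ∈ goldenArea) :
    u ^ 2 + w ^ 2 ≤ √5 * (u * w) := by
  obtain ⟨hu, -, -, -, hlow, hhigh⟩ := h
  simp only at hu hlow hhigh
  rw [le_div_iff₀ hu] at hlow
  rw [div_le_iff₀ hu] at hhigh
  have sqrt_sq : √5 ^ 2 = (5 : ℝ) := Real.sq_sqrt (by norm_num)
  have factored := mul_nonneg (sub_nonneg.2 hlow) (sub_nonneg.2 hhigh)
  linear_combination factored - u ^ 2 / 4 * sqrt_sq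

theorem sqWeight_sub_one_le_of_mem_goldenArea {u w : ℝ} (e : ℝ) (h : (u, w) ∈ goldenArea) :
    sqWeight (e - 1) u w ≤ √5 * (1 / (u * w)) ^ e := by
  simpa only [prodWeight, sub_add_cancel] using
    sqWeight_le_mul_prodWeight (δ := e - 1) h.1 h.2.2.1 (sq_add_sq_le_of_mem_goldenArea h)

theorem energy_bound_golden_general (e : ℝ) (he : 1 < e) :
    ∃ C : ℝ, 0 < C ∧ ∀ (p : ℕ → ℝ × ℝ) (s : ℕ), IsExcursion p s →
      ∑ i ∈ Finset.Icc 1 s, |∑ j ∈ Finset.range i, (khat (p j) - 3)| ≤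
        C * ((1 / (p 0).1 ^ 2 + 1 / (p s).1 ^ 2) * (1 / ((p 0).1 * (p s).1)) ^ (e - 1)) := by
  have hδ : 0 < e - 1 := sub_pos.2 he
  refine ⟨2 * ((2 + (e - 1)) / (e - 1) * (3 / (e - 1) + 1)) + 4, by positivity, fun p s hp ↦ ?_⟩
  obtain ⟨hu, hu1, -⟩ := hp.2.1 0 (Nat.zero_le s)
  obtain ⟨hw, hw1, -⟩ := hp.2.1 s le_rfl
  have energy_le := energy_le_potential hδ hp.sternBrocot hp.isFareyChain
  have potential_le := potential_le_mul_sqWeight hδ hu hw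
  have one_le : 1 ≤ (1 / ((p 0).1 * (p s).1)) ^ (e - 1) :=
    Real.one_le_rpow (one_le_one_div (mul_pos hu hw) (mul_le_one₀ hu1 hw.le hw1)) hδ.le
  have sq_le : 1 / (p 0).1 ^ 2 + 1 / (p s).1 ^ 2 ≤ sqWeight (e - 1) (p 0).1 (p s).1 :=
    le_mul_of_one_le_right (by positivity) one_le
  rw [← sqWeight]
  linarith [hp.sum_abs_sum_khat_sub_three_le]

theorem energy_bound_golden (e : ℝ) (he : 1 < e) :
    ∃ C : ℝ, 0 < C ∧ ∀ (p : ℕ → ℝ × ℝ) (s : ℕ), IsExcursion p s →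
      ((p 0).1, (p s).1) ∈ goldenArea →
      ∑ i ∈ Finset.Icc 1 s, |∑ j ∈ Finset.range i, (khat (p j) - 3)| ≤
        C * (1 / ((p 0).1 * (p s).1)) ^ e := by
  obtain ⟨C, hC, hle⟩ := energy_bound_golden_general e he
  exact ⟨C * √5, by positivity, fun p s hp hΔ ↦ ((hle p s hp).trans (mul_le_mul_of_nonneg_left
    (sqWeight_sub_one_le_of_mem_goldenArea e hΔ) hC.le)).trans_eq (mul_assoc _ _ _).symm⟩
end

section
/- Let g be a real-valued function on the Farey triangle Ω. Suppose there exist α ≥ 1 and C₁ > 0 such that for every excursion ((a_i,b_i))_{i=0}^{s} of the BCZ map, |Σ_{j=0}^{s−1} g(a_j,b_j)| < C₁·((a_0/a_s)^α + (a_s/a_0)^α). Then for every ε > 0 there exists C > 0 such that for every excursion ((a_i,b_i))_{i=0}^{s} with (a_0, a_s) ∈ Δ, Σ_{i=1}^{s} |Σ_{j=0}^{i−1} g(a_j,b_j)| ≤ C · (1/(a_0·a_s))^{(α+1)/2 + ε}. -/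
/-!
The `x`-coordinates of an excursion satisfy `x i + x (i + 2) = k * x (i + 1)` with `k` an integer,
and are smallest at the endpoints. At a first descent `k` must be `1`, so the term in the middle is
the sum of its neighbours; deleting it preserves the situation. Hence an excursion from `a` to `b`
is built by Stern–Brocot insertion: it is a single edge, or it splits into excursions from `a` to
`a + b` and from `a + b` to `b`. Since `1 / (a * b)` is additive under this splitting, it bounds the
length of the excursion.

Splitting the energy at the mediant costs the length of the right part times the sum of `g` over the
left part, hence at most a constant times `min a b ^ (-α) / (a + b)`. The energy is therefore
dominated by any function of `(a, b)` that drops by at least this cost at each split; such a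
function of size `(1 / (a * b)) ^ ((α + 1) / 2 + ε)` on balanced pairs is written down explicitly,
the loss of `ε` being what makes `b ^ (-ε) - (a + b) ^ (-ε)` comparable to `a / (a + b)`.
-/

section MediantArcs

variable {R : Type*} [CommRing R] [LinearOrder R]

/-- Abstraction of the sequence of `x`-coordinates of an excursion of length `s`: it is stable under
deleting an interior term equal to the sum of its neighbours, which the BCZ dynamics is not. -/
structure IsArch (x : ℕ → R) (s : ℕ) : Prop where
  mem_Ioc : ∀ i ≤ s, x i ∈ Set.Ioc 0 1
  exists_add_eq_mul : ∀ i, i + 2 ≤ s → ∃ k : ℤ, x i + x (i + 2) = k * x (i + 1)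
  lt_interior : ∀ i, 0 < i → i < s → x 0 < x i ∧ x s < x i

/-- `IsMediantArc x i j` says that `x i, …, x j` are values in `(0, 1]` obtained from the endpoints
`x i`, `x j` by repeatedly inserting the sum of two neighbours, as in the Stern–Brocot tree. -/
inductive IsMediantArc (x : ℕ → R) : ℕ → ℕ → Prop
  | edge {i : ℕ} (left_mem : x i ∈ Set.Ioc 0 1) (right_mem : x (i + 1) ∈ Set.Ioc 0 1) :
      IsMediantArc x i (i + 1)
  | mediant {i k j : ℕ} (left : IsMediantArc x i k) (right : IsMediantArc x k j)
      (eq_add : x k = x i + x j) : IsMediantArc x i j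

namespace IsMediantArc

variable {x : ℕ → R} {i j : ℕ}

lemma lt (h : IsMediantArc x i j) : i < j := by
  induction h with
  | edge => exact Nat.lt_add_one _
  | mediant _ _ _ hik hkj => exact hik.trans hkj

lemma left_mem_Ioc (h : IsMediantArc x i j) : x i ∈ Set.Ioc 0 1 := by
  induction h with
  | edge hi => exact hi
  | mediant _ _ _ hi => exact hi

lemma right_mem_Ioc (h : IsMediantArc x i j) : x j ∈ Set.Ioc 0 1 := by
  induction h with
  | edge _ hj => exact hj
  | mediant _ _ _ _ hj => exact hj

variable [IsStrictOrderedRing R]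

lemma add_le_interior (h : IsMediantArc x i j) {n : ℕ} (hin : i < n) (hnj : n < j) :
    x i + x j ≤ x n := by
  induction h with
  | edge => omega
  | @mediant i k j hik hkj hk ih_left ih_right =>
    have hi := hik.left_mem_Ioc.1
    have hj := hkj.right_mem_Ioc.1
    rcases lt_trichotomy n k with hnk | rfl | hkn
    · linarith [ih_left hin hnk]
    · exact hk.ge
    · linarith [ih_right hkn hnj]

/-- The induction step is `1 / (a * b) = 1 / (a * (a + b)) + 1 / ((a + b) * b)`. -/
lemma length_mul_le_one (h : IsMediantArc x i j) : ((j : R) - i) * (x i * x j) ≤ 1 := by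
  induction h with
  | edge hi hj => simpa using mul_le_one₀ hi.2 hj.1.le hj.2
  | @mediant i k j hik hkj hk ih_left ih_right =>
    have hi := hik.left_mem_Ioc.1
    have hj := hkj.right_mem_Ioc.1
    refine le_of_mul_le_mul_right ?_ hik.right_mem_Ioc.1
    calc ((j : R) - i) * (x i * x j) * x k
        = x j * (((k : R) - i) * (x i * x k)) + x i * (((j : R) - k) * (x k * x j)) := by ring
      _ ≤ x j * 1 + x i * 1 := by gcongr
      _ = 1 * x k := by rw [hk]; ring

end IsMediantArc

/-- The increasing enumeration of the natural numbers other than `m + 1`. -/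
def skip (m n : ℕ) : ℕ := if n ≤ m then n else n + 1

lemma skip_of_le {m n : ℕ} (h : n ≤ m) : skip m n = n := if_pos h

lemma skip_of_lt {m n : ℕ} (h : m < n) : skip m n = n + 1 := if_neg h.not_ge

lemma IsMediantArc.of_comp_skip {x : ℕ → R} {m i j : ℕ} (h : IsMediantArc (x ∘ skip m) i j)
    (hmem : x (m + 1) ∈ Set.Ioc 0 1) (hm : x (m + 1) = x m + x (m + 2)) :
    IsMediantArc x (skip m i) (skip m j) := by
  induction h with
  | @edge i hi hj =>
    simp only [Function.comp_apply] at hi hj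
    rcases lt_trichotomy i m with him | rfl | hmi
    · rw [skip_of_le him.le] at hi ⊢
      rw [skip_of_le him] at hj ⊢
      exact .edge hi hj
    · rw [skip_of_le le_rfl] at hi ⊢
      rw [skip_of_lt (Nat.lt_add_one i)] at hj ⊢
      exact .mediant (.edge hi hmem) (.edge hmem hj) hm
    · rw [skip_of_lt hmi] at hi ⊢
      rw [skip_of_lt (by omega)] at hj ⊢
      exact .edge hi hj
  | mediant _ _ hk ih_left ih_right => exact .mediant ih_left ih_right hk

namespace IsArch

variable {x : ℕ → R} {s : ℕ}

lemma comp_skip {m : ℕ} (h : IsArch x (s + 1)) (hms : m < s)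
    (hm : x (m + 1) = x m + x (m + 2)) : IsArch (x ∘ skip m) s where
  mem_Ioc i hi := h.mem_Ioc _ (by unfold skip; split_ifs <;> omega)
  exists_add_eq_mul i hi := by
    simp only [Function.comp_apply]
    obtain hmi | rfl | rfl | him : m < i ∨ m = i ∨ m = i + 1 ∨ i + 2 ≤ m := by omega
    · rw [skip_of_lt hmi, skip_of_lt (by omega), skip_of_lt (by omega)]
      exact h.exists_add_eq_mul (i + 1) (by omega)
    · rw [skip_of_le le_rfl, skip_of_lt (by omega), skip_of_lt (by omega)]
      obtain ⟨k, hk⟩ := h.exists_add_eq_mul (m + 1) (by omega)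
      exact ⟨k - 1, by push_cast; linear_combination hk - hm⟩
    · rw [skip_of_le (by omega), skip_of_le le_rfl, skip_of_lt (by omega)]
      obtain ⟨k, hk⟩ := h.exists_add_eq_mul i (by omega)
      exact ⟨k - 1, by push_cast; linear_combination hk - hm⟩
    · rw [skip_of_le him, skip_of_le (by omega), skip_of_le (by omega)]
      exact h.exists_add_eq_mul i (by omega)
  lt_interior i hi0 his := by
    simp only [Function.comp_apply, skip_of_le m.zero_le, skip_of_lt hms]
    exact h.lt_interior _ (by unfold skip; split_ifs <;> omega)
      (by unfold skip; split_ifs <;> omega)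

variable [IsStrictOrderedRing R]

/-- Take `m + 1` to be the first descent: then `0 < x m + x (m + 2) < 2 * x (m + 1)`, and the only
integer multiple of `x (m + 1)` in this range is `x (m + 1)` itself. -/
lemma exists_eq_add_neighbours (h : IsArch x (s + 2)) :
    ∃ m ≤ s, x (m + 1) = x m + x (m + 2) := by
  classical
  have hdescent : ∃ n, x (n + 1) ≤ x n :=
    ⟨s + 1, (h.lt_interior (s + 1) (by omega) (by omega)).2.le⟩
  obtain ⟨m, hm⟩ : ∃ m, Nat.find hdescent = m + 1 := by
    refine Nat.exists_eq_succ_of_ne_zero fun h0 => ?_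
    have hle := Nat.find_spec hdescent
    rw [h0] at hle
    exact (h.lt_interior 1 (by omega) (by omega)).1.not_ge hle
  have hms : m ≤ s := by
    have := Nat.find_min' hdescent (h.lt_interior (s + 1) (by omega) (by omega)).2.le
    omega
  have hleft : x m < x (m + 1) := not_le.1 (Nat.find_min hdescent (by omega))
  have hright : x (m + 2) ≤ x (m + 1) := by simpa [hm] using Nat.find_spec hdescent
  obtain ⟨k, hk⟩ := h.exists_add_eq_mul m (by omega)
  have hm0 := (h.mem_Ioc m (by omega)).1
  have hm1 := (h.mem_Ioc (m + 1) (by omega)).1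
  have hm2 := (h.mem_Ioc (m + 2) (by omega)).1
  have hk0 : (0 : R) < k := pos_of_mul_pos_left (by linarith) hm1.le
  have hk2 : (k : R) < 2 := lt_of_mul_lt_mul_right (by linarith) hm1.le
  have hk1 : k = 1 := by
    have : 0 < k := by exact_mod_cast hk0
    have : k < 2 := by exact_mod_cast hk2
    omega
  exact ⟨m, hms, by simpa [hk1] using hk.symm⟩

lemma isMediantArc (h : IsArch x (s + 1)) : IsMediantArc x 0 (s + 1) := by
  induction s generalizing x with
  | zero => exact .edge (h.mem_Ioc 0 (by omega)) (h.mem_Ioc 1 le_rfl)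
  | succ s ih =>
    obtain ⟨m, hms, hm⟩ := h.exists_eq_add_neighbours
    have harc := (ih (h.comp_skip (by omega) hm)).of_comp_skip (h.mem_Ioc (m + 1) (by omega)) hm
    rwa [skip_of_le m.zero_le, skip_of_lt (by omega)] at harc

end IsArch

end MediantArcs

namespace IsExcursion

variable {p : ℕ → ℝ × ℝ} {s : ℕ}

lemma isArch (h : IsExcursion p s) : IsArch (fun n => (p n).1) s where
  mem_Ioc i hi := ⟨(h.2.1 i hi).1, (h.2.1 i hi).2.1⟩
  exists_add_eq_mul i hi := by
    refine ⟨⌊(1 + (p i).1) / (p i).2⌋, ?_⟩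
    rw [h.2.2.1 (i + 1) (by omega), h.2.2.1 i (by omega)]
    simp [bczT]
  lt_interior := h.2.2.2

lemma isMediantArc (h : IsExcursion p s) : IsMediantArc (fun n => (p n).1) 0 s := by
  obtain ⟨t, rfl⟩ := Nat.exists_eq_add_of_le' h.1
  exact h.isArch.isMediantArc

lemma shift (h : IsExcursion p s) {i j : ℕ} (harc : IsMediantArc (fun n => (p n).1) i j)
    (hjs : j ≤ s) : IsExcursion (fun n => p (i + n)) (j - i) := by
  have hij := harc.lt
  refine ⟨by omega, fun n hn => h.2.1 _ (by omega), fun n hn => h.2.2.1 (i + n) (by omega),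
    fun n hn0 hn => ?_⟩
  have hle := harc.add_le_interior (n := i + n) (by omega) (by omega)
  have hi := harc.left_mem_Ioc.1
  have hj := harc.right_mem_Ioc.1
  simp only [add_zero, Nat.add_sub_cancel' hij.le]
  constructor <;> linarith

end IsExcursion

section Energy

variable {E : Type*} [SeminormedAddCommGroup E]

/-- The total size of the partial sums of `u` along the window from `i` to `j`. -/
noncomputable def partialSumEnergy (u : ℕ → E) (i j : ℕ) : ℝ :=
  ∑ n ∈ Finset.Ioc i j, ‖∑ m ∈ Finset.Ico i n, u m‖

lemma partialSumEnergy_le_add (u : ℕ → E) {i k j : ℕ} (hik : i ≤ k) (hkj : k ≤ j) :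
    partialSumEnergy u i j ≤ partialSumEnergy u i k + partialSumEnergy u k j
      + ((j : ℝ) - k) * ‖∑ m ∈ Finset.Ico i k, u m‖ := by
  have hright : ∑ n ∈ Finset.Ioc k j, ‖∑ m ∈ Finset.Ico i n, u m‖ ≤
      ∑ n ∈ Finset.Ioc k j, (‖∑ m ∈ Finset.Ico k n, u m‖ + ‖∑ m ∈ Finset.Ico i k, u m‖) := by
    gcongr with n hn
    rw [← Finset.sum_Ico_consecutive u hik (Finset.mem_Ioc.1 hn).1.le, add_comm]
    exact norm_add_le _ _
  rw [Finset.sum_add_distrib, Finset.sum_const, Nat.card_Ioc, nsmul_eq_mul,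
    Nat.cast_sub hkj] at hright
  unfold partialSumEnergy
  rw [← Finset.sum_Ioc_consecutive _ hik hkj]
  linarith

lemma IsMediantArc.partialSumEnergy_le {x : ℕ → ℝ} {u : ℕ → E} {S Φ : ℝ → ℝ → ℝ} {s i j : ℕ}
    (hsum : ∀ i j, IsMediantArc x i j → j ≤ s → ‖∑ m ∈ Finset.Ico i j, u m‖ ≤ S (x i) (x j))
    (hedge : ∀ a ∈ Set.Ioc (0 : ℝ) 1, ∀ b ∈ Set.Ioc (0 : ℝ) 1, S a b ≤ Φ a b)
    (hsplit : ∀ a b : ℝ, 0 < a → 0 < b → a + b ≤ 1 →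
      Φ a (a + b) + Φ (a + b) b + S a (a + b) / ((a + b) * b) ≤ Φ a b)
    (h : IsMediantArc x i j) (hjs : j ≤ s) : partialSumEnergy u i j ≤ Φ (x i) (x j) := by
  induction h with
  | @edge i hi hj =>
    calc partialSumEnergy u i (i + 1) = ‖∑ m ∈ Finset.Ico i (i + 1), u m‖ := by
          simp [partialSumEnergy]
      _ ≤ S (x i) (x (i + 1)) := hsum _ _ (.edge hi hj) hjs
      _ ≤ Φ (x i) (x (i + 1)) := hedge _ hi _ hj
  | @mediant i k j hik hkj hk ih_left ih_right =>
    have hks : k ≤ s := hkj.lt.le.trans hjs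
    have hi := hik.left_mem_Ioc.1
    have hj := hkj.right_mem_Ioc.1
    have hk_mem := hik.right_mem_Ioc
    have hlength : (j : ℝ) - k ≤ 1 / (x k * x j) :=
      (le_div_iff₀ (mul_pos hk_mem.1 hj)).2 hkj.length_mul_le_one
    calc partialSumEnergy u i j
        ≤ partialSumEnergy u i k + partialSumEnergy u k j
          + ((j : ℝ) - k) * ‖∑ m ∈ Finset.Ico i k, u m‖ :=
          partialSumEnergy_le_add u hik.lt.le hkj.lt.le
      _ ≤ Φ (x i) (x k) + Φ (x k) (x j) + 1 / (x k * x j) * S (x i) (x k) := by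
          have := hk_mem.1
          gcongr
          exacts [ih_left hks, ih_right hjs, hsum i k hik hks]
      _ = Φ (x i) (x k) + Φ (x k) (x j) + S (x i) (x k) / (x k * x j) := by
          rw [one_div_mul_eq_div]
      _ ≤ Φ (x i) (x j) := by
          rw [hk] at hk_mem ⊢
          exact hsplit _ _ hi hj hk_mem.2

end Energy

section Potential

lemma mul_one_sub_div_mul_rpow_neg_le {ε x y : ℝ} (hε : 0 ≤ ε) (hx : 0 < x) (hy : 0 < y) :
    ε * (1 - x / y) * y ^ (-ε) ≤ x ^ (-ε) - y ^ (-ε) := by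
  have hratio : 1 + ε * (1 - x / y) ≤ (y / x) ^ ε := by
    have hlog := Real.one_sub_inv_le_log_of_pos (div_pos hy hx)
    rw [inv_div] at hlog
    calc 1 + ε * (1 - x / y) ≤ Real.log (y / x) * ε + 1 := by
          linarith [mul_le_mul_of_nonneg_left hlog hε]
      _ ≤ Real.exp (Real.log (y / x) * ε) := Real.add_one_le_exp _
      _ = (y / x) ^ ε := (Real.rpow_def_of_pos (div_pos hy hx) ε).symm
  have hx_eq : x ^ (-ε) = (y / x) ^ ε * y ^ (-ε) := by
    rw [Real.div_rpow hy.le hx.le, Real.rpow_neg hx.le, Real.rpow_neg hy.le]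
    field_simp
  rw [hx_eq]
  linarith [mul_le_mul_of_nonneg_right hratio (Real.rpow_nonneg hy.le (-ε))]

lemma rpow_one_add_add_rpow_one_add_le {y z κ : ℝ} (hz : 0 ≤ z) (hzy : z ≤ y) (hκ : 0 ≤ κ) :
    y ^ (1 + κ) + z ^ (1 + κ) + (1 - (1 / 2) ^ κ) * (z * (y + z) ^ κ) ≤ (y + z) ^ (1 + κ) := by
  have hy : 0 ≤ y := hz.trans hzy
  have hκ' : 1 + κ ≠ 0 := by positivity
  have hyκ : y ^ κ ≤ (y + z) ^ κ := by gcongr; linarith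
  have hzκ : z ^ κ ≤ (1 / 2) ^ κ * (y + z) ^ κ := by
    rw [← Real.mul_rpow (by norm_num) (by positivity)]
    gcongr
    linarith
  rw [Real.rpow_one_add' hy hκ', Real.rpow_one_add' hz hκ',
    Real.rpow_one_add' (add_nonneg hy hz) hκ']
  linarith [mul_le_mul_of_nonneg_left hyκ hy, mul_le_mul_of_nonneg_left hzκ hz]

lemma one_div_mul_rpow_add_le {a b κ : ℝ} (ha : 0 < a) (hab : a ≤ b) (hκ : 0 ≤ κ) :
    (1 / (a * (a + b))) ^ (1 + κ) + (1 / ((a + b) * b)) ^ (1 + κ)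
      + (1 - (1 / 2) ^ κ) / 2 * (1 / b ^ 2) ^ (1 + κ) ≤ (1 / (a * b)) ^ (1 + κ) := by
  have hb : 0 < b := ha.trans_le hab
  have hsum : 1 / (a * (a + b)) + 1 / ((a + b) * b) = 1 / (a * b) := by field_simp; ring
  have hle : 1 / ((a + b) * b) ≤ 1 / (a * (a + b)) :=
    one_div_le_one_div_of_le (by positivity) (by nlinarith)
  have hhalf : (1 / 2 : ℝ) ^ κ ≤ 1 := Real.rpow_le_one (by norm_num) (by norm_num) hκ
  have hsq : 1 / 2 * (1 / b ^ 2) ≤ 1 / ((a + b) * b) := by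
    rw [one_div_mul_one_div]
    exact one_div_le_one_div_of_le (by positivity) (by nlinarith)
  have hsq' : 1 / b ^ 2 ≤ 1 / (a * b) :=
    one_div_le_one_div_of_le (by positivity) (by nlinarith)
  have hgap : 1 / 2 * (1 / b ^ 2) ^ (1 + κ) ≤ 1 / ((a + b) * b) * (1 / (a * b)) ^ κ := by
    rw [Real.rpow_one_add' (by positivity) (by positivity), ← mul_assoc]
    gcongr
  have hconvex := rpow_one_add_add_rpow_one_add_le (by positivity) hle hκ
  rw [hsum] at hconvex
  linarith [mul_le_mul_of_nonneg_left hgap (sub_nonneg.2 hhalf)]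

lemma one_sub_half_rpow_pos {κ : ℝ} (hκ : 0 < κ) : (0 : ℝ) < 1 - (1 / 2) ^ κ :=
  sub_pos.2 (Real.rpow_lt_one (by norm_num) (by norm_num) hκ)

/-- A weight on pairs of endpoints which, up to a constant, dominates the energy of excursions.
When `(a, b)` with `a ≤ b` is split into `(a, a + b)` and `(a + b, b)`, the first term drops by the
cost of the split, and the last one drops by a multiple of `b ^ (-(α + 1 + ε))`, which pays for the
new terms `(a + b) ^ (-(α + 1)) * b ^ (-ε)` and `b ^ (-(α + 1)) * (a + b) ^ (-ε)`. -/
noncomputable def mediantPotential (α ε a b : ℝ) : ℝ :=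
  a ^ (-(α + 1)) * b ^ (-ε) + b ^ (-(α + 1)) * a ^ (-ε)
    + 4 / (1 - (1 / 2) ^ ((α - 1 + ε) / 2)) * (1 / (a * b)) ^ (1 + (α - 1 + ε) / 2)

lemma mediantPotential_comm (α ε a b : ℝ) :
    mediantPotential α ε a b = mediantPotential α ε b a := by
  unfold mediantPotential
  rw [mul_comm a b]
  ring

variable {α ε a b : ℝ}

lemma mul_rpow_neg_div_add_le (α : ℝ) (hε : 0 ≤ ε) (ha : 0 < a) (hb : 0 < b) (hsum : a + b ≤ 1) :
    ε * (a ^ (-α) / (a + b)) ≤ a ^ (-(α + 1)) * (b ^ (-ε) - (a + b) ^ (-ε)) := by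
  have hw : 0 < a + b := by positivity
  have hw_one : 1 ≤ (a + b) ^ (-ε) :=
    Real.one_le_rpow_of_pos_of_le_one_of_nonpos hw hsum (by linarith)
  calc ε * (a ^ (-α) / (a + b)) = a ^ (-(α + 1)) * (ε * (1 - b / (a + b)) * 1) := by
        rw [show -α = -(α + 1) + 1 by ring, Real.rpow_add_one ha.ne']
        field_simp
        ring
    _ ≤ a ^ (-(α + 1)) * (ε * (1 - b / (a + b)) * (a + b) ^ (-ε)) := by
        have : b / (a + b) ≤ 1 := (div_le_one hw).2 (by linarith)
        have : 0 ≤ 1 - b / (a + b) := by linarith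
        gcongr
    _ ≤ a ^ (-(α + 1)) * (b ^ (-ε) - (a + b) ^ (-ε)) := by
        gcongr
        exact mul_one_sub_div_mul_rpow_neg_le hε hb hw

lemma mediantPotential_split_of_le (hα : 1 ≤ α) (hε : 0 < ε) (ha : 0 < a) (hab : a ≤ b)
    (hsum : a + b ≤ 1) :
    mediantPotential α ε a (a + b) + mediantPotential α ε (a + b) b
      + ε * (a ^ (-α) / (a + b)) ≤ mediantPotential α ε a b := by
  have hb : 0 < b := ha.trans_le hab
  have hc : (0 : ℝ) < 1 - (1 / 2) ^ ((α - 1 + ε) / 2) := one_sub_half_rpow_pos (by linarith)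
  have hcost := mul_rpow_neg_div_add_le α hε.le ha hb hsum
  have hpay := mul_le_mul_of_nonneg_left
    (one_div_mul_rpow_add_le ha hab (κ := (α - 1 + ε) / 2) (by linarith)) (div_pos four_pos hc).le
  have hdiag : (1 / b ^ 2) ^ (1 + (α - 1 + ε) / 2) = b ^ (-(α + 1)) * b ^ (-ε) := by
    rw [one_div, ← Real.rpow_natCast, ← Real.rpow_neg hb.le, ← Real.rpow_mul hb.le,
      ← Real.rpow_add hb]
    congr 1
    push_cast
    ring
  have hweight (t : ℝ) : 4 / (1 - (1 / 2) ^ ((α - 1 + ε) / 2)) *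
      ((1 - (1 / 2) ^ ((α - 1 + ε) / 2)) / 2 * t) = 2 * t := by
    field_simp
    ring
  rw [mul_add, mul_add, hweight, hdiag] at hpay
  have hw_left : (a + b) ^ (-(α + 1)) ≤ b ^ (-(α + 1)) :=
    Real.rpow_le_rpow_of_nonpos hb (by linarith) (by linarith)
  have hw_right : (a + b) ^ (-ε) ≤ b ^ (-ε) :=
    Real.rpow_le_rpow_of_nonpos hb (by linarith) (by linarith)
  have hnew_a := mul_le_mul_of_nonneg_right hw_left (Real.rpow_nonneg ha.le (-ε))
  have hnew_b := mul_le_mul_of_nonneg_right hw_left (Real.rpow_nonneg hb.le (-ε))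
  have hnew_w := mul_le_mul_of_nonneg_left hw_right (Real.rpow_nonneg hb.le (-(α + 1)))
  unfold mediantPotential
  linarith

lemma mediantPotential_split (hα : 1 ≤ α) (hε : 0 < ε) (ha : 0 < a) (hb : 0 < b)
    (hsum : a + b ≤ 1) :
    mediantPotential α ε a (a + b) + mediantPotential α ε (a + b) b
      + ε * (min a b ^ (-α) / (a + b)) ≤ mediantPotential α ε a b := by
  rcases le_total a b with hab | hba
  · rw [min_eq_left hab]
    exact mediantPotential_split_of_le hα hε ha hab hsum
  · have hswap := mediantPotential_split_of_le hα hε hb hba (by linarith)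
    rw [min_eq_right hba, mediantPotential_comm α ε a b, mediantPotential_comm α ε a,
      mediantPotential_comm α ε _ b, add_comm a b]
    linarith

lemma mul_rpow_neg_div_le_min (hα : 1 ≤ α) (ha : 0 < a) (hb : 0 < b) :
    (a + b) * a ^ (-α) / b ≤ 2 * min a b ^ (-α) := by
  rw [div_le_iff₀ hb]
  rcases le_total a b with hab | hba
  · rw [min_eq_left hab]
    linarith [mul_le_mul_of_nonneg_right hab (Real.rpow_nonneg ha.le (-α))]
  · have hmono : a ^ (-α + 1) ≤ b ^ (-α + 1) :=
      Real.rpow_le_rpow_of_nonpos hb hba (by linarith)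
    rw [Real.rpow_add_one ha.ne', Real.rpow_add_one hb.ne'] at hmono
    rw [min_eq_right hba]
    linarith [mul_le_mul_of_nonneg_right hba (Real.rpow_nonneg ha.le (-α))]

lemma ratio_rpow_div_mul_le_min (hα : 1 ≤ α) (ha : 0 < a) (hb : 0 < b) (hsum : a + b ≤ 1) :
    ((a / (a + b)) ^ α + ((a + b) / a) ^ α) / ((a + b) * b) ≤
      4 * (min a b ^ (-α) / (a + b)) := by
  have hw : 0 < a + b := by positivity
  have hinv : (a / (a + b)) ^ α ≤ ((a + b) / a) ^ α := by
    have h1 : a / (a + b) ≤ 1 := (div_le_one hw).2 (by linarith)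
    have h2 : 1 ≤ (a + b) / a := (one_le_div ha).2 (by linarith)
    exact Real.rpow_le_rpow (by positivity) (h1.trans h2) (by linarith)
  have hpow : ((a + b) / a) ^ α ≤ (a + b) * a ^ (-α) := by
    rw [Real.div_rpow hw.le ha.le, Real.rpow_neg ha.le, ← div_eq_mul_inv]
    gcongr
    exact Real.rpow_le_self_of_le_one hw.le hsum hα
  calc ((a / (a + b)) ^ α + ((a + b) / a) ^ α) / ((a + b) * b)
      ≤ ((a + b) * a ^ (-α) + (a + b) * a ^ (-α)) / ((a + b) * b) := by
        gcongr
        exact hinv.trans hpow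
    _ = 2 * ((a + b) * a ^ (-α) / b / (a + b)) := by field_simp; ring
    _ ≤ 2 * (2 * min a b ^ (-α) / (a + b)) := by
        gcongr
        exact mul_rpow_neg_div_le_min hα ha hb
    _ = 4 * (min a b ^ (-α) / (a + b)) := by ring

lemma mediantPotential_split_add_ratio_rpow (hα : 1 ≤ α) (hε : 0 < ε) (ha : 0 < a) (hb : 0 < b)
    (hsum : a + b ≤ 1) :
    mediantPotential α ε a (a + b) + mediantPotential α ε (a + b) b
      + ε / 4 * (((a / (a + b)) ^ α + ((a + b) / a) ^ α) / ((a + b) * b)) ≤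
        mediantPotential α ε a b := by
  linarith [mediantPotential_split hα hε ha hb hsum,
    mul_le_mul_of_nonneg_left (ratio_rpow_div_mul_le_min hα ha hb hsum)
      (div_pos hε four_pos).le]

lemma div_rpow_le_rpow_neg_mul (hα : 0 ≤ α) (hε : 0 ≤ ε) (ha : a ∈ Set.Ioc 0 1)
    (hb : b ∈ Set.Ioc 0 1) : (a / b) ^ α ≤ b ^ (-(α + 1)) * a ^ (-ε) := by
  have ha_pow : a ^ α ≤ a ^ (-ε) :=
    Real.rpow_le_rpow_of_exponent_ge ha.1 ha.2 (by linarith)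
  have hb_pow : b ^ (-α) ≤ b ^ (-(α + 1)) :=
    Real.rpow_le_rpow_of_exponent_ge hb.1 hb.2 (by linarith)
  rw [Real.div_rpow ha.1.le hb.1.le, div_eq_inv_mul, ← Real.rpow_neg hb.1.le]
  exact mul_le_mul hb_pow ha_pow (Real.rpow_nonneg ha.1.le _) (Real.rpow_nonneg hb.1.le _)

lemma ratio_rpow_le_mediantPotential (hα : 1 ≤ α) (hε : 0 < ε) (ha : a ∈ Set.Ioc 0 1)
    (hb : b ∈ Set.Ioc 0 1) : (a / b) ^ α + (b / a) ^ α ≤ mediantPotential α ε a b := by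
  have hc : (0 : ℝ) < 1 - (1 / 2) ^ ((α - 1 + ε) / 2) := one_sub_half_rpow_pos (by linarith)
  have ha0 := ha.1
  have hb0 := hb.1
  have hlast : 0 ≤ 4 / (1 - (1 / 2) ^ ((α - 1 + ε) / 2)) *
      (1 / (a * b)) ^ (1 + (α - 1 + ε) / 2) := by positivity
  unfold mediantPotential
  linarith [div_rpow_le_rpow_neg_mul (zero_le_one.trans hα) hε.le ha hb,
    div_rpow_le_rpow_neg_mul (zero_le_one.trans hα) hε.le hb ha]

lemma rpow_neg_mul_rpow_neg_le (hα : -1 ≤ α) (hε : 0 ≤ ε) (ha : a ∈ Set.Ioc 0 1) (hb : 0 < b) :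
    a ^ (-(α + 1)) * b ^ (-ε) ≤
      (a / b + b / a) ^ ((α + 1) / 2) * (1 / (a * b)) ^ ((α + 1) / 2 + ε) := by
  have ha0 := ha.1
  have ha_sq : a ^ (-(α + 1)) = (b / a * (1 / (a * b))) ^ ((α + 1) / 2) := by
    rw [show b / a * (1 / (a * b)) = a ^ (-2 : ℝ) by
      rw [Real.rpow_neg ha0.le, Real.rpow_two]; field_simp, ← Real.rpow_mul ha0.le]
    congr 1
    ring
  have hb_inv : b ^ (-ε) = (1 / b) ^ ε := by rw [one_div, Real.rpow_neg_eq_inv_rpow]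
  calc a ^ (-(α + 1)) * b ^ (-ε)
      = (b / a) ^ ((α + 1) / 2) * ((1 / (a * b)) ^ ((α + 1) / 2) * (1 / b) ^ ε) := by
        rw [ha_sq, hb_inv, Real.mul_rpow (by positivity) (by positivity), mul_assoc]
    _ ≤ (a / b + b / a) ^ ((α + 1) / 2) *
          ((1 / (a * b)) ^ ((α + 1) / 2) * (1 / (a * b)) ^ ε) := by
        have : 0 ≤ a / b := by positivity
        gcongr
        · linarith
        · linarith
        · exact mul_le_of_le_one_left hb.le ha.2
    _ = _ := by rw [← Real.rpow_add (by positivity)]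

lemma mediantPotential_le (hα : 1 ≤ α) (hε : 0 < ε) (ha : a ∈ Set.Ioc 0 1)
    (hb : b ∈ Set.Ioc 0 1) :
    mediantPotential α ε a b ≤ (2 + 4 / (1 - (1 / 2) ^ ((α - 1 + ε) / 2))) *
      ((a / b + b / a) ^ ((α + 1) / 2) * (1 / (a * b)) ^ ((α + 1) / 2 + ε)) := by
  have hc : (0 : ℝ) < 1 - (1 / 2) ^ ((α - 1 + ε) / 2) := one_sub_half_rpow_pos (by linarith)
  have ha0 := ha.1
  have hb0 := hb.1
  have hleft := rpow_neg_mul_rpow_neg_le (α := α) (by linarith) hε.le ha hb0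
  have hright := rpow_neg_mul_rpow_neg_le (α := α) (by linarith) hε.le hb ha0
  rw [add_comm (b / a), mul_comm b a] at hright
  have hratio : 1 ≤ a / b + b / a := by
    rw [div_add_div _ _ hb0.ne' ha0.ne', one_le_div (by positivity)]
    nlinarith [sq_nonneg (a - b)]
  have harea : 1 ≤ 1 / (a * b) :=
    (one_le_div (by positivity)).2 (mul_le_one₀ ha.2 hb0.le hb.2)
  have hlast : (1 / (a * b)) ^ (1 + (α - 1 + ε) / 2) ≤
      (a / b + b / a) ^ ((α + 1) / 2) * (1 / (a * b)) ^ ((α + 1) / 2 + ε) :=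
    calc (1 / (a * b)) ^ (1 + (α - 1 + ε) / 2) ≤ 1 * (1 / (a * b)) ^ ((α + 1) / 2 + ε) := by
          rw [one_mul]
          exact Real.rpow_le_rpow_of_exponent_le harea (by linarith)
      _ ≤ _ := by
          gcongr
          exact Real.one_le_rpow hratio (by linarith)
  unfold mediantPotential
  linarith [mul_le_mul_of_nonneg_left hlast (div_pos four_pos hc).le]

end Potential

lemma IsExcursion.energy_le_mediantPotential {E : Type*} [SeminormedAddCommGroup E]
    {g : ℝ × ℝ → E} {α ε C₁ : ℝ} (hα : 1 ≤ α) (hε : 0 < ε) (hC₁ : 0 ≤ C₁)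
    (hg : ∀ (p : ℕ → ℝ × ℝ) (s : ℕ), IsExcursion p s →
      ‖∑ j ∈ Finset.range s, g (p j)‖ ≤
        C₁ * (((p 0).1 / (p s).1) ^ α + ((p s).1 / (p 0).1) ^ α))
    {p : ℕ → ℝ × ℝ} {s : ℕ} (h : IsExcursion p s) :
    ∑ i ∈ Finset.Icc 1 s, ‖∑ j ∈ Finset.range i, g (p j)‖ ≤
      C₁ * (1 + 4 / ε) * mediantPotential α ε (p 0).1 (p s).1 := by
  have hsum (i j : ℕ) (harc : IsMediantArc (fun n => (p n).1) i j) (hjs : j ≤ s) :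
      ‖∑ m ∈ Finset.Ico i j, g (p m)‖ ≤
        C₁ * (((p i).1 / (p j).1) ^ α + ((p j).1 / (p i).1) ^ α) := by
    simpa [Finset.sum_Ico_eq_sum_range, Nat.add_sub_cancel' harc.lt.le] using
      hg _ _ (h.shift harc hjs)
  set K := C₁ * (1 + 4 / ε) with hK
  have hK_edge : C₁ ≤ K := le_mul_of_one_le_right hC₁ (by linarith [div_pos four_pos hε])
  have hK_split : C₁ ≤ K * (ε / 4) := by
    rw [hK, mul_assoc, show (1 + 4 / ε) * (ε / 4) = 1 + ε / 4 by field_simp; ring]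
    exact le_mul_of_one_le_right hC₁ (by linarith)
  have henergy := IsMediantArc.partialSumEnergy_le
    (S := fun a b => C₁ * ((a / b) ^ α + (b / a) ^ α))
    (Φ := fun a b => K * mediantPotential α ε a b) hsum ?_ ?_ h.isMediantArc le_rfl
  · simpa only [partialSumEnergy, ← Finset.range_eq_Ico, ← Finset.Icc_add_one_left_eq_Ioc,
      zero_add] using henergy
  · intro a ha b hb
    have ha0 := ha.1
    have hb0 := hb.1
    exact mul_le_mul hK_edge (ratio_rpow_le_mediantPotential hα hε ha hb) (by positivity)
      (hC₁.trans hK_edge)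
  · intro a b ha hb hab
    have hcost : 0 ≤ ((a / (a + b)) ^ α + ((a + b) / a) ^ α) / ((a + b) * b) := by positivity
    have hsplit := mul_le_mul_of_nonneg_left
      (mediantPotential_split_add_ratio_rpow hα hε ha hb hab) (hC₁.trans hK_edge)
    rw [mul_div_assoc]
    linarith [mul_le_mul_of_nonneg_right hK_split hcost]

theorem energy_bound_general_general {E : Type*} [SeminormedAddCommGroup E]
    (g : ℝ × ℝ → E) (α C₁ : ℝ) (hα : 1 ≤ α) (hC₁ : 0 < C₁)
    (hg : ∀ (p : ℕ → ℝ × ℝ) (s : ℕ), IsExcursion p s →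
      ‖∑ j ∈ Finset.range s, g (p j)‖ ≤
        C₁ * (((p 0).1 / (p s).1) ^ α + ((p s).1 / (p 0).1) ^ α))
    (ε : ℝ) (hε : 0 < ε) :
    ∃ C : ℝ, 0 < C ∧ ∀ (p : ℕ → ℝ × ℝ) (s : ℕ), IsExcursion p s →
      ∑ i ∈ Finset.Icc 1 s, ‖∑ j ∈ Finset.range i, g (p j)‖ ≤
        C * (((p 0).1 / (p s).1 + (p s).1 / (p 0).1) ^ ((α + 1) / 2) *
          (1 / ((p 0).1 * (p s).1)) ^ ((α + 1) / 2 + ε)) := by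
  have hc : (0 : ℝ) < 1 - (1 / 2) ^ ((α - 1 + ε) / 2) := one_sub_half_rpow_pos (by linarith)
  refine ⟨C₁ * (1 + 4 / ε) * (2 + 4 / (1 - (1 / 2) ^ ((α - 1 + ε) / 2))), by positivity,
    fun p s h => (h.energy_le_mediantPotential hα hε hC₁.le hg).trans ?_⟩
  rw [mul_assoc (C₁ * (1 + 4 / ε))]
  gcongr
  exact mediantPotential_le hα hε h.isMediantArc.left_mem_Ioc h.isMediantArc.right_mem_Ioc

lemma div_add_div_le_sqrt_five {q : ℝ × ℝ} (hq : q ∈ goldenArea) :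
    q.1 / q.2 + q.2 / q.1 ≤ √5 := by
  obtain ⟨h1, -, h2, -, hlower, hupper⟩ := hq
  have hr : 0 < q.2 / q.1 := div_pos h2 h1
  have hsqrt : √5 ^ 2 = 5 := Real.sq_sqrt (by norm_num)
  rw [← inv_div q.2 q.1]
  set r := q.2 / q.1
  have hquad : r ^ 2 + 1 ≤ √5 * r := by
    nlinarith [mul_nonneg (sub_nonneg.2 hlower) (sub_nonneg.2 hupper)]
  calc r⁻¹ + r = (r ^ 2 + 1) / r := by field_simp; ring
    _ ≤ √5 := (div_le_iff₀ hr).2 hquad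

theorem energy_bound_general (g : ℝ × ℝ → ℝ) (α C₁ : ℝ) (hα : 1 ≤ α) (hC₁ : 0 < C₁)
    (hg : ∀ (p : ℕ → ℝ × ℝ) (s : ℕ), IsExcursion p s →
      |∑ j ∈ Finset.range s, g (p j)| <
        C₁ * (((p 0).1 / (p s).1) ^ α + ((p s).1 / (p 0).1) ^ α))
    (ε : ℝ) (hε : 0 < ε) :
    ∃ C : ℝ, 0 < C ∧ ∀ (p : ℕ → ℝ × ℝ) (s : ℕ), IsExcursion p s →
      ((p 0).1, (p s).1) ∈ goldenArea →
      ∑ i ∈ Finset.Icc 1 s, |∑ j ∈ Finset.range i, g (p j)| ≤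
        C * (1 / ((p 0).1 * (p s).1)) ^ ((α + 1) / 2 + ε) := by
  obtain ⟨C, hC, henergy⟩ :=
    energy_bound_general_general g α C₁ hα hC₁ (fun p s h => (hg p s h).le) ε hε
  refine ⟨C * √5 ^ ((α + 1) / 2), by positivity, fun p s h hΔ => (henergy p s h).trans ?_⟩
  have h0 : 0 < (p 0).1 := hΔ.1
  have hs : 0 < (p s).1 := hΔ.2.2.1
  rw [mul_assoc]
  gcongr
  exact div_add_div_le_sqrt_five hΔ
end

section
/- Let g be a real-valued function on the Farey triangle Ω. Suppose: (1) there exist α > 1 and C₁ > 0 such that for every excursion ((a_i,b_i))_{i=0}^{s} of the BCZ map, |Σ_{j=0}^{s−1} g(a_j,b_j)| < C₁·((a_0/a_s)^α + (a_s/a_0)^α); and (2) there exist β with 0 < β < α, C₂ > 0 and γ > 0 such that for every excursion ((a_i,b_i))_{i=0}^{s} with (a_0, a_s) ∈ Δ and every integer i with 1 ≤ i < γ·(1/a_0)^{2 − β/α}, one has |Σ_{j=0}^{i−1} g(a_j,b_j)| < C₂·((1/a_0)^β + (1/a_s)^β). Then for every ε > 0 there exists C > 0 such that for every excursion ((a_i,b_i))_{i=0}^{s}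 with (a_0, a_s) ∈ Δ, Σ_{i=1}^{s} |Σ_{j=0}^{i−1} g(a_j,b_j)| ≤ C · (1/(a_0·a_s))^{1 + (β/2)(1 − 1/α) + ε}. -/
/-!
The first coordinates along an orbit of the BCZ map are those of lattice vectors whose neighbours
have determinant one. By Plücker's relation the ends of an excursion then have determinant one as
well, so an excursion from `x` to `y` has at most `1 / (x * y)` steps and splits at the minimum of
its interior, which is the mediant `x + y`. A golden excursion starting at a point survives under
this splitting: if `y ≤ x`, then `(x, y)` or `(x, x + y)` lies in the golden ratio area.

The two hypotheses interpolate, with `δ = β * (1 - 1 / α)`: for an excursion that rises from `x` to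
`z`, where `x` also starts a golden excursion, the sum of `g` is `O((1 / x) ^ δ * (z / x))`. Hence
splitting an excursion costs at most `1 / (z * y) * (1 / x) ^ δ * (z / x)`, that is
`(1 / x) ^ δ / (x * y)`, because the right part has at most `1 / (z * y)` steps. A potential
`Ψ x y` which drops by `1 / (x * y)` when split at `x + y` therefore bounds the energy, and on
golden excursions `Ψ` exceeds `1 / (x * y)` only by the square of a logarithm.
-/

section Rpow

lemma rpow_mul_one_add_log_sq_le {w : ℝ} (hw : 1 ≤ w) (κ : ℝ) {ε : ℝ} (hε : 0 < ε) :
    w ^ κ * (1 + Real.log w) ^ 2 ≤ (1 + 2 / ε) ^ 2 * w ^ (κ + ε) := by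
  have hw0 : 0 < w := by linarith
  have hlog0 : 0 ≤ Real.log w := Real.log_nonneg hw
  have hlog : Real.log w ≤ w ^ (ε / 2) / (ε / 2) := Real.log_le_rpow_div hw0.le (half_pos hε)
  have hone : 1 ≤ w ^ (ε / 2) := Real.one_le_rpow hw (half_pos hε).le
  calc w ^ κ * (1 + Real.log w) ^ 2
      ≤ w ^ κ * (w ^ (ε / 2) + w ^ (ε / 2) / (ε / 2)) ^ 2 := by gcongr
    _ = (1 + 2 / ε) ^ 2 * (w ^ κ * (w ^ (ε / 2) * w ^ (ε / 2))) := by field_simp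
    _ = (1 + 2 / ε) ^ 2 * w ^ (κ + ε) := by
        rw [← Real.rpow_add hw0, ← Real.rpow_add hw0, add_halves]

lemma antitoneOn_mul_one_div_rpow {K δ : ℝ} (hK : 0 ≤ K) (hδ : 0 ≤ δ) :
    AntitoneOn (fun x : ℝ => K * (1 / x) ^ δ) (Set.Ioi 0) := fun _ hx _ hy hxy =>
  mul_le_mul_of_nonneg_left (Real.rpow_le_rpow (one_div_pos.mpr hy).le
    (one_div_le_one_div_of_le hx hxy) hδ) hK

lemma le_mul_of_le_mul_rpow_of_imp_le_mul_rpow {X r v A B α β γ : ℝ} (hα : 1 ≤ α) (hγ : 0 < γ)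
    (hA : 0 ≤ A) (hB : 0 ≤ B) (hX : 0 < X) (hr : 0 < r) (hvA : v ≤ A * r ^ α)
    (hvB : X ^ (β / α) < γ * r → v ≤ B * X ^ β) :
    v ≤ (A * (1 / γ) ^ (α - 1) + B * γ) * X ^ (β * (1 - 1 / α)) * r := by
  have hα0 : α ≠ 0 := by positivity
  rw [add_mul, add_mul]
  obtain hlt | hle := lt_or_ge (X ^ (β / α)) (γ * r)
  · refine le_add_of_nonneg_of_le (by positivity) ?_
    calc v ≤ B * X ^ (β * (1 - 1 / α) + β / α) :=
          (hvB hlt).trans_eq (by congr 2; field_simp; ring)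
      _ = B * X ^ (β * (1 - 1 / α)) * X ^ (β / α) := by rw [Real.rpow_add hX, mul_assoc]
      _ ≤ B * X ^ (β * (1 - 1 / α)) * (γ * r) := by gcongr
      _ = B * γ * X ^ (β * (1 - 1 / α)) * r := by ring
  · refine le_add_of_le_of_nonneg ?_ (by positivity)
    have hr_le : r ≤ 1 / γ * X ^ (β / α) := by
      rwa [one_div_mul_eq_div, le_div_iff₀ hγ, mul_comm]
    have hpow : r ^ (α - 1) ≤ (1 / γ) ^ (α - 1) * X ^ (β * (1 - 1 / α)) := by
      calc r ^ (α - 1) ≤ (1 / γ * X ^ (β / α)) ^ (α - 1) :=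
            Real.rpow_le_rpow hr.le hr_le (by linarith)
        _ = (1 / γ) ^ (α - 1) * X ^ (β * (1 - 1 / α)) := by
            rw [Real.mul_rpow (by positivity) (by positivity), ← Real.rpow_mul hX.le]
            congr 2
            field_simp
    calc v ≤ A * (r ^ (α - 1) * r) :=
          hvA.trans_eq (by rw [← Real.rpow_add_one hr.ne', sub_add_cancel])
      _ ≤ A * ((1 / γ) ^ (α - 1) * X ^ (β * (1 - 1 / α)) * r) := by gcongr
      _ = A * (1 / γ) ^ (α - 1) * X ^ (β * (1 - 1 / α)) * r := by ring

end Rpow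

section Arch

variable {R : Type*} [LinearOrder R] {a : ℕ → R} {i j : ℕ}

/-- The sequence `a` stays above its values at both ends on the open index interval `(i, j)`; this
is the index version of an excursion. The inequality at the right end is weak, so that an arch can
be cut at the last minimum of its interior. -/
def IsArch_s4 (a : ℕ → R) (i j : ℕ) : Prop :=
  i < j ∧ ∀ t, i < t → t < j → a i < a t ∧ a j ≤ a t

lemma IsArch_s4.exists_split (h : IsArch_s4 a i j) (hij : i + 1 < j) :
    ∃ m, IsArch_s4 a i m ∧ IsArch_s4 a m j := by
  obtain ⟨m, hm, hmin⟩ := Finset.exists_min_image (Finset.Ioo i j)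
    (fun t => toLex (a t, OrderDual.toDual t)) ⟨i + 1, by simp [hij]⟩
  obtain ⟨him, hmj⟩ := Finset.mem_Ioo.mp hm
  have hlast : ∀ t, i < t → t < j → a m < a t ∨ a m = a t ∧ t ≤ m := fun t hit htj =>
    (Prod.Lex.toLex_le_toLex.mp (hmin t (Finset.mem_Ioo.mpr ⟨hit, htj⟩)))
  refine ⟨m, ⟨him, fun t hit htm => ⟨(h.2 t hit (htm.trans hmj)).1, ?_⟩⟩,
    ⟨hmj, fun t hmt htj => ⟨?_, (h.2 t (him.trans hmt) htj).2⟩⟩⟩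
  · exact (hlast t hit (htm.trans hmj)).elim le_of_lt fun h => h.1.le
  · exact (hlast t (him.trans hmt) htj).resolve_right fun h => h.2.not_gt hmt

@[elab_as_elim]
theorem IsArch_s4.split_induction {motive : ∀ i j, IsArch_s4 a i j → Prop}
    (succ : ∀ i h, motive i (i + 1) h)
    (split : ∀ i m j him hmj hij, motive i m him → motive m j hmj → motive i j hij)
    (h : IsArch_s4 a i j) : motive i j h := by
  induction hn : j - i using Nat.strong_induction_on generalizing i j with
  | _ n ih =>
    obtain hij | rfl := (Nat.succ_le_of_lt h.1).lt_or_eq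
    · obtain ⟨m, him, hmj⟩ := h.exists_split hij
      have := him.1
      have := hmj.1
      exact split i m j him hmj h (ih (m - i) (by omega) him rfl) (ih (j - m) (by omega) hmj rfl)
    · exact succ i h

end Arch

section LatticeSeq

variable {K : Type*} [Field K] {a : ℕ → K} {i m j : ℕ}

/-- The determinant of the lattice vectors number `i ≤ j` in the sequence with first coordinates
`a`: the difference of their slopes, which grows by `1 / (a t * a (t + 1))` at each step, times
their first coordinates. -/
def crossDet (a : ℕ → K) (i j : ℕ) : K :=
  a i * a j * ∑ t ∈ Finset.Ico i j, 1 / (a t * a (t + 1))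

lemma crossDet_mul_add_crossDet_mul (a : ℕ → K) (him : i ≤ m) (hmj : m ≤ j) :
    crossDet a i m * a j + crossDet a m j * a i = crossDet a i j * a m := by
  simp only [crossDet, ← Finset.sum_Ico_consecutive _ him hmj]
  ring

variable [LinearOrder K]

/-- The first coordinates of a sequence of vectors of a planar lattice, consecutive ones of
determinant one, all in the right half-plane. The first coordinates along an orbit of the BCZ map
form such a sequence. -/
structure IsLatticeSeq (a : ℕ → K) : Prop where
  pos : ∀ t, 0 < a t
  exists_int : ∀ t, ∃ k : ℤ, a (t + 2) = k * a (t + 1) - a t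

namespace IsLatticeSeq

lemma crossDet_succ (ha : IsLatticeSeq a) (i : ℕ) : crossDet a i (i + 1) = 1 := by
  have := ha.pos i
  have := ha.pos (i + 1)
  simp only [crossDet, Nat.Ico_succ_singleton, Finset.sum_singleton]
  field_simp

lemma crossDet_add_two (ha : IsLatticeSeq a) (hij : i ≤ j) {k : ℤ}
    (hk : a (j + 2) = k * a (j + 1) - a j) :
    crossDet a i (j + 2) = k * crossDet a i (j + 1) - crossDet a i j := by
  have h₀ := ha.pos j
  have h₁ := ha.pos (j + 1)
  have h₂ := ha.pos (j + 2)
  have hk' : (k : K) = (a (j + 2) + a j) / a (j + 1) := by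
    rw [hk, sub_add_cancel, mul_div_cancel_right₀ _ h₁.ne']
  simp only [crossDet, hk', Finset.sum_Ico_succ_top (show i ≤ j + 1 by omega),
    Finset.sum_Ico_succ_top hij]
  field_simp
  ring

lemma exists_int_crossDet (ha : IsLatticeSeq a) (hij : i ≤ j) : ∃ k : ℤ, crossDet a i j = k := by
  obtain ⟨n, rfl⟩ := Nat.exists_eq_add_of_le hij
  clear hij
  induction n using Nat.twoStepInduction with
  | zero => exact ⟨0, by simp [crossDet]⟩
  | one => exact ⟨1, by simp [ha.crossDet_succ]⟩
  | more n ih₀ ih₁ =>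
    obtain ⟨d₀, h₀⟩ := ih₀
    obtain ⟨d₁, h₁⟩ := ih₁
    obtain ⟨k, hk⟩ := ha.exists_int (i + n)
    refine ⟨k * d₁ - d₀, ?_⟩
    push_cast
    rw [← h₀, ← h₁]
    exact ha.crossDet_add_two (Nat.le_add_right i n) hk

end IsLatticeSeq

variable [IsStrictOrderedRing K]

theorem IsArch_s4.crossDet_eq_one (ha : IsLatticeSeq a) (h : IsArch_s4 a i j) : crossDet a i j = 1 := by
  induction h using IsArch_s4.split_induction with
  | succ i => exact ha.crossDet_succ i
  | split i m j him hmj hij dim dmj =>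
    obtain ⟨k, hk⟩ := ha.exists_int_crossDet hij.1.le
    obtain ⟨hi, hj⟩ := hij.2 m him.1 hmj.1
    have hsum : a j + a i = k * a m := by
      simpa only [dim, dmj, hk, one_mul] using crossDet_mul_add_crossDet_mul a him.1.le hmj.1.le
    have hm := ha.pos m
    have k_pos : (0 : K) < k := pos_of_mul_pos_left (hsum ▸ add_pos (ha.pos j) (ha.pos i)) hm.le
    have k_lt_two : (k : K) < 2 := lt_of_mul_lt_mul_right (by linarith) hm.le
    have k_eq_one : k = 1 := by
      have : 0 < k := by exact_mod_cast k_pos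
      have : k < 2 := by exact_mod_cast k_lt_two
      omega
    rw [hk, k_eq_one, Int.cast_one]

lemma IsArch_s4.eq_add (ha : IsLatticeSeq a) (him : IsArch_s4 a i m) (hmj : IsArch_s4 a m j)
    (hij : IsArch_s4 a i j) : a m = a i + a j := by
  have h := crossDet_mul_add_crossDet_mul a him.1.le hmj.1.le
  rw [him.crossDet_eq_one ha, hmj.crossDet_eq_one ha, hij.crossDet_eq_one ha] at h
  linarith

lemma IsArch_s4.right_lt (ha : IsLatticeSeq a) (h : IsArch_s4 a i j) {t : ℕ} (hit : i < t)
    (htj : t < j) : a j < a t := by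
  obtain ⟨m, him, hmj⟩ := h.exists_split (by omega)
  have hm : a j < a m := by linarith [him.eq_add ha hmj h, ha.pos i]
  obtain htm | rfl | hmt := lt_trichotomy t m
  · exact hm.trans_le (him.2 t hit htm).2
  · exact hm
  · exact hm.trans (hmj.2 t hmt htj).1

lemma IsArch_s4.length_le (ha : IsLatticeSeq a) (ha1 : ∀ t, a t ≤ 1) (h : IsArch_s4 a i j) :
    ((j - i : ℕ) : K) ≤ 1 / (a i * a j) := by
  have hdet : a i * a j * ∑ t ∈ Finset.Ico i j, 1 / (a t * a (t + 1)) = 1 := h.crossDet_eq_one ha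
  have hone : ∀ t ∈ Finset.Ico i j, 1 ≤ 1 / (a t * a (t + 1)) := fun t _ =>
    one_le_one_div (mul_pos (ha.pos t) (ha.pos (t + 1)))
      (mul_le_one₀ (ha1 t) (ha.pos (t + 1)).le (ha1 (t + 1)))
  calc ((j - i : ℕ) : K) = ∑ t ∈ Finset.Ico i j, 1 := by simp
    _ ≤ ∑ t ∈ Finset.Ico i j, 1 / (a t * a (t + 1)) := Finset.sum_le_sum hone
    _ = 1 / (a i * a j) := eq_one_div_of_mul_eq_one_right hdet

end LatticeSeq

section Potential

variable {x y : ℝ}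

/-- A function of the two end values of an arch that decreases by at least `1 / (x * y)` when the
arch is split at `x + y`, see `energyPotential_split`. -/
noncomputable def energyPotential (x y : ℝ) : ℝ :=
  -Real.log x / y ^ 2 + -Real.log y / x ^ 2 + (Real.log x + Real.log y) ^ 2 / (x * y)

lemma energyPotential_nonneg (hx : 0 < x) (hy : 0 < y) (hx1 : x ≤ 1) (hy1 : y ≤ 1) :
    0 ≤ energyPotential x y := by
  have := neg_nonneg.mpr (Real.log_nonpos hx.le hx1)
  have := neg_nonneg.mpr (Real.log_nonpos hy.le hy1)
  unfold energyPotential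
  positivity

lemma div_add_le_log_add_sub_log (hx : 0 < x) (hy : 0 < y) :
    y / (x + y) ≤ Real.log (x + y) - Real.log x := by
  have hxy : 0 < x + y := add_pos hx hy
  calc y / (x + y) = 1 - ((x + y) / x)⁻¹ := by field_simp; ring
    _ ≤ Real.log ((x + y) / x) := Real.one_sub_inv_le_log_of_pos (div_pos hxy hx)
    _ = Real.log (x + y) - Real.log x := Real.log_div hxy.ne' hx.ne'

lemma neg_log_div_sq_split (hx : 0 < x) (hy : 0 < y) :
    -Real.log (x + y) / x ^ 2 + -Real.log (x + y) / y ^ 2 + 1 / (x * y) ≤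
      -Real.log x / y ^ 2 + -Real.log y / x ^ 2 := by
  have hlx : y / (x + y) ≤ Real.log (x + y) - Real.log x := div_add_le_log_add_sub_log hx hy
  have hly : x / (x + y) ≤ Real.log (x + y) - Real.log y := by
    simpa only [add_comm y x] using div_add_le_log_add_sub_log hy hx
  have hsum : y / (x + y) / y ^ 2 + x / (x + y) / x ^ 2 = 1 / (x * y) := by
    have : x + y ≠ 0 := (add_pos hx hy).ne'
    field_simp
  have hle : y / (x + y) / y ^ 2 + x / (x + y) / x ^ 2 ≤
      (Real.log (x + y) - Real.log x) / y ^ 2 + (Real.log (x + y) - Real.log y) / x ^ 2 := by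
    gcongr
  linear_combination hle - hsum

lemma sq_log_add_log_div_split (hx : 0 < x) (hy : 0 < y) (hxy : x + y ≤ 1) :
    (Real.log x + Real.log (x + y)) ^ 2 / (x * (x + y)) +
        (Real.log (x + y) + Real.log y) ^ 2 / ((x + y) * y) +
        (-Real.log x - Real.log y) / (x + y) ^ 2 ≤
      (Real.log x + Real.log y) ^ 2 / (x * y) := by
  have hz : 0 < x + y := add_pos hx hy
  have hw : Real.log (x + y) ≤ 0 := Real.log_nonpos hz.le hxy
  have hux : Real.log x ≤ Real.log (x + y) := Real.log_le_log hx (by linarith)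
  have hvy : Real.log y ≤ Real.log (x + y) := Real.log_le_log hy (by linarith)
  have hvx : x / (x + y) ≤ Real.log (x + y) - Real.log y := by
    simpa only [add_comm y x] using div_add_le_log_add_sub_log hy hx
  generalize Real.log x = u at *
  generalize Real.log y = v at *
  generalize Real.log (x + y) = w at *
  have hs : 0 ≤ -u - v := by linarith
  have hu : (u + w) ^ 2 ≤ (-u - v) * (-u - w) := by nlinarith
  have hv : (w + v) ^ 2 ≤ (-u - v) * (-w - v) := by nlinarith
  have hrest : 1 / (x + y) ^ 2 - (w - v) / (x * (x + y)) - (w - u) / ((x + y) * y) ≤ 0 := by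
    have hle : x / (x + y) / (x * (x + y)) ≤ (w - v) / (x * (x + y)) := by gcongr
    have heq : x / (x + y) / (x * (x + y)) = 1 / (x + y) ^ 2 := by field_simp
    have : 0 ≤ (w - u) / ((x + y) * y) := div_nonneg (by linarith) (by positivity)
    linarith
  calc (u + w) ^ 2 / (x * (x + y)) + (w + v) ^ 2 / ((x + y) * y) + (-u - v) / (x + y) ^ 2
      ≤ (-u - v) * (-u - w) / (x * (x + y)) + (-u - v) * (-w - v) / ((x + y) * y) +
          (-u - v) / (x + y) ^ 2 := by gcongr
    _ = (u + v) ^ 2 / (x * y) + (-u - v) *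
          (1 / (x + y) ^ 2 - (w - v) / (x * (x + y)) - (w - u) / ((x + y) * y)) := by
        field_simp
        ring
    _ ≤ (u + v) ^ 2 / (x * y) :=
        add_le_of_nonpos_right (mul_nonpos_of_nonneg_of_nonpos hs hrest)

lemma energyPotential_split (hx : 0 < x) (hy : 0 < y) (hxy : x + y ≤ 1) :
    energyPotential x (x + y) + energyPotential (x + y) y + 1 / (x * y) ≤
      energyPotential x y := by
  unfold energyPotential
  linear_combination neg_log_div_sq_split hx hy + sq_log_add_log_div_split hx hy hxy

lemma energyPotential_le (hx : 0 < x) (hy : 0 < y) (hx1 : x ≤ 1) (hy1 : y ≤ 1)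
    (hxy : x ≤ 2 * y) (hyx : y ≤ 2 * x) :
    energyPotential x y ≤ 1 / (x * y) * (1 + Real.log (1 / (x * y))) ^ 2 := by
  have hlx := neg_nonneg.mpr (Real.log_nonpos hx.le hx1)
  have hly := neg_nonneg.mpr (Real.log_nonpos hy.le hy1)
  have hinv_y : 1 / y ^ 2 ≤ 2 / (x * y) := by
    rw [div_le_div_iff₀ (by positivity) (by positivity)]
    nlinarith
  have hinv_x : 1 / x ^ 2 ≤ 2 / (x * y) := by
    rw [div_le_div_iff₀ (by positivity) (by positivity)]
    nlinarith
  have hlog : Real.log (1 / (x * y)) = -Real.log x + -Real.log y := by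
    rw [one_div, Real.log_inv, Real.log_mul hx.ne' hy.ne', neg_add]
  calc energyPotential x y
      = -Real.log x * (1 / y ^ 2) + -Real.log y * (1 / x ^ 2) +
          (Real.log x + Real.log y) ^ 2 / (x * y) := by unfold energyPotential; ring
    _ ≤ -Real.log x * (2 / (x * y)) + -Real.log y * (2 / (x * y)) +
          (Real.log x + Real.log y) ^ 2 / (x * y) := by gcongr
    _ = 1 / (x * y) * (1 + Real.log (1 / (x * y))) ^ 2 - 1 / (x * y) := by rw [hlog]; ring
    _ ≤ 1 / (x * y) * (1 + Real.log (1 / (x * y))) ^ 2 := sub_le_self _ (by positivity)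

end Potential

section Golden

variable {x y : ℝ}

lemma two_le_sqrt_five : 2 ≤ √(5 : ℝ) := Real.le_sqrt_of_sq_le (by norm_num)

lemma sqrt_five_le_three : √(5 : ℝ) ≤ 3 := Real.sqrt_le_iff.mpr (by norm_num)

lemma left_le_two_mul_right_of_mem_goldenArea (h : (x, y) ∈ goldenArea) : x ≤ 2 * y := by
  obtain ⟨hx, -, -, -, hle, -⟩ := h
  have := (le_div_iff₀ hx).mp hle
  nlinarith [two_le_sqrt_five]

lemma right_le_two_mul_left_of_mem_goldenArea (h : (x, y) ∈ goldenArea) : y ≤ 2 * x := by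
  obtain ⟨hx, -, -, -, -, hle⟩ := h
  have := (div_le_iff₀ hx).mp hle
  nlinarith [sqrt_five_le_three]

lemma one_le_one_div_mul_of_mem_goldenArea (h : (x, y) ∈ goldenArea) : 1 ≤ 1 / (x * y) := by
  obtain ⟨hx, hx1, hy, hy1, -, -⟩ := h
  exact one_le_one_div (mul_pos hx hy) (mul_le_one₀ hx1 hy.le hy1)

lemma one_div_rpow_le_of_mem_goldenArea {δ : ℝ} (h : (x, y) ∈ goldenArea) (hδ : 0 ≤ δ) :
    (1 / x) ^ δ ≤ 2 ^ (δ / 2) * (1 / (x * y)) ^ (δ / 2) := by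
  have ⟨hx, _, hy, _⟩ := h
  have hsq : (1 / x) ^ (2 : ℝ) ≤ 2 * (1 / (x * y)) := by
    rw [Real.rpow_two, div_pow, one_pow, mul_one_div,
      div_le_div_iff₀ (by positivity) (by positivity)]
    nlinarith [right_le_two_mul_left_of_mem_goldenArea h]
  calc (1 / x) ^ δ = ((1 / x) ^ (2 : ℝ)) ^ (δ / 2) := by
        rw [← Real.rpow_mul (by positivity), mul_div_cancel₀ δ two_ne_zero]
    _ ≤ (2 * (1 / (x * y))) ^ (δ / 2) := by gcongr
    _ = 2 ^ (δ / 2) * (1 / (x * y)) ^ (δ / 2) := Real.mul_rpow zero_le_two (by positivity)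

lemma one_div_rpow_mul_energyPotential_le {δ : ℝ} (h : (x, y) ∈ goldenArea) (hδ : 0 ≤ δ) :
    (1 / x) ^ δ * energyPotential x y ≤
      2 ^ (δ / 2) * ((1 / (x * y)) ^ (1 + δ / 2) * (1 + Real.log (1 / (x * y))) ^ 2) := by
  have ⟨hx, hx1, hy, hy1, _⟩ := h
  calc (1 / x) ^ δ * energyPotential x y
      ≤ 2 ^ (δ / 2) * (1 / (x * y)) ^ (δ / 2) *
          (1 / (x * y) * (1 + Real.log (1 / (x * y))) ^ 2) :=
        mul_le_mul (one_div_rpow_le_of_mem_goldenArea h hδ)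
          (energyPotential_le hx hy hx1 hy1 (left_le_two_mul_right_of_mem_goldenArea h)
            (right_le_two_mul_left_of_mem_goldenArea h))
          (energyPotential_nonneg hx hy hx1 hy1) (by positivity)
    _ = 2 ^ (δ / 2) * ((1 / (x * y)) ^ (1 + δ / 2) * (1 + Real.log (1 / (x * y))) ^ 2) := by
        rw [Real.rpow_one_add' (by positivity) (by positivity)]
        ring

lemma mem_goldenArea_or_add_mem_goldenArea (hx : 0 < x) (hy : 0 < y) (hyx : y ≤ x)
    (hxy : x + y ≤ 1) : (x, y) ∈ goldenArea ∨ (x, x + y) ∈ goldenArea := by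
  have hr : y / x ≤ 1 := (div_le_one hx).mpr hyx
  have hr0 : 0 < y / x := div_pos hy hx
  have hadd : (x + y) / x = 1 + y / x := by rw [add_div, div_self hx.ne']
  by_cases hc : (√5 - 1) / 2 ≤ y / x
  · exact Or.inl ⟨hx, by linarith, hy, by linarith, hc, by linarith [two_le_sqrt_five]⟩
  · refine Or.inr ⟨hx, by linarith, add_pos hx hy, hxy, ?_, ?_⟩ <;> simp only [hadd]
    · linarith [sqrt_five_le_three]
    · linarith [not_le.mp hc]

end Golden

section Energy

variable {a S : ℕ → ℝ} {i m j : ℕ}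

/-- Some arch starting at `i` has its end values in the golden ratio area. The bound on initial sums
of golden excursions then applies to every arch starting at `i` that is short enough. -/
def HasGoldenArch (a : ℕ → ℝ) (i : ℕ) : Prop :=
  ∃ j, IsArch_s4 a i j ∧ (a i, a j) ∈ goldenArea

lemma IsArch_s4.hasGoldenArch_of_split (ha : IsLatticeSeq a) (ha1 : ∀ t, a t ≤ 1)
    (him : IsArch_s4 a i m) (hmj : IsArch_s4 a m j) (hij : IsArch_s4 a i j) (hle : a j ≤ a i) :
    HasGoldenArch a i := by
  have hsum := him.eq_add ha hmj hij
  obtain h | h := mem_goldenArea_or_add_mem_goldenArea (ha.pos i) (ha.pos j) hle (hsum ▸ ha1 m)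
  · exact ⟨j, hij, h⟩
  · exact ⟨m, him, hsum ▸ h⟩

lemma sum_Ico_abs_sub_le (S : ℕ → ℝ) (him : i ≤ m) (hmj : m ≤ j) :
    ∑ t ∈ Finset.Ico i j, |S t - S i| ≤ ∑ t ∈ Finset.Ico i m, |S t - S i| +
      ∑ t ∈ Finset.Ico m j, |S t - S m| + ((j - m : ℕ) : ℝ) * |S m - S i| := by
  calc ∑ t ∈ Finset.Ico i j, |S t - S i|
      = ∑ t ∈ Finset.Ico i m, |S t - S i| + ∑ t ∈ Finset.Ico m j, |S t - S i| :=
        (Finset.sum_Ico_consecutive _ him hmj).symm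
    _ ≤ ∑ t ∈ Finset.Ico i m, |S t - S i| +
          ∑ t ∈ Finset.Ico m j, (|S t - S m| + |S m - S i|) := by
        gcongr
        exact abs_sub_le _ _ _
    _ = ∑ t ∈ Finset.Ico i m, |S t - S i| + ∑ t ∈ Finset.Ico m j, |S t - S m| +
          ((j - m : ℕ) : ℝ) * |S m - S i| := by
        rw [Finset.sum_add_distrib, Finset.sum_const, Nat.card_Ico, nsmul_eq_mul, add_assoc]

theorem IsArch_s4.sum_abs_sub_le (ha : IsLatticeSeq a) (ha1 : ∀ t, a t ≤ 1) {B : ℝ → ℝ}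
    (hB : AntitoneOn B (Set.Ioi 0)) (hB0 : ∀ x, 0 < x → 0 ≤ B x)
    (hS : ∀ i m, IsArch_s4 a i m → a i ≤ a m → HasGoldenArch a i →
      |S m - S i| ≤ B (a i) * (a m / a i))
    (hij : IsArch_s4 a i j) (hG : HasGoldenArch a i) :
    ∑ t ∈ Finset.Ico i j, |S t - S i| ≤ B (a i) * energyPotential (a i) (a j) := by
  -- The induction passes to arches whose left end is the split point. They start higher than
  -- they end, so they have a golden arch at the left end as soon as they split again.
  suffices h : HasGoldenArch a i ∨ a j ≤ a i →
      ∑ t ∈ Finset.Ico i j, |S t - S i| ≤ B (a i) * energyPotential (a i) (a j) from h (Or.inl hG)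
  clear hG
  induction hij using IsArch_s4.split_induction with
  | succ i =>
    intro _
    simpa using mul_nonneg (hB0 _ (ha.pos i)) (energyPotential_nonneg (ha.pos i) (ha.pos _)
      (ha1 i) (ha1 _))
  | split i m j him hmj hij ihim ihmj =>
    intro h
    have hG : HasGoldenArch a i := h.elim id (him.hasGoldenArch_of_split ha ha1 hmj hij)
    have hsum := him.eq_add ha hmj hij
    have hi := ha.pos i
    have hj := ha.pos j
    have hm := ha.pos m
    have hle : a i ≤ a m := by linarith
    have left := ihim (Or.inl hG)
    have right : ∑ t ∈ Finset.Ico m j, |S t - S m| ≤ B (a i) * energyPotential (a m) (a j) :=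
      (ihmj (Or.inr (by linarith))).trans (mul_le_mul_of_nonneg_right (hB hi hm hle)
        (energyPotential_nonneg hm hj (ha1 m) (ha1 j)))
    have shift : ((j - m : ℕ) : ℝ) * |S m - S i| ≤ B (a i) * (1 / (a i * a j)) := by
      calc ((j - m : ℕ) : ℝ) * |S m - S i|
          ≤ 1 / (a m * a j) * (B (a i) * (a m / a i)) := by
            gcongr
            · exact hmj.length_le ha ha1
            · exact hS i m him hle hG
        _ = B (a i) * (1 / (a i * a j)) := by field_simp
    calc ∑ t ∈ Finset.Ico i j, |S t - S i|
        ≤ ∑ t ∈ Finset.Ico i m, |S t - S i| + ∑ t ∈ Finset.Ico m j, |S t - S m| +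
            ((j - m : ℕ) : ℝ) * |S m - S i| := sum_Ico_abs_sub_le S him.1.le hmj.1.le
      _ ≤ B (a i) * (energyPotential (a i) (a i + a j) + energyPotential (a i + a j) (a j) +
            1 / (a i * a j)) := by
          rw [← hsum]
          linarith
      _ ≤ B (a i) * energyPotential (a i) (a j) :=
          mul_le_mul_of_nonneg_left (energyPotential_split hi hj (hsum ▸ ha1 m)) (hB0 _ hi)

end Energy

section Growth

variable {a S : ℕ → ℝ} {α C₁ β C₂ γ : ℝ} {i m : ℕ}

/-- The two hypotheses of the energy bound, in terms of the sequence `a` of first coordinates along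
an orbit of the BCZ map and the sequence `S` of partial sums of `g` along it. -/
structure HasExcursionBounds (a S : ℕ → ℝ) (α C₁ β C₂ γ : ℝ) : Prop where
  abs_sub_le : ∀ i j, IsArch_s4 a i j →
    |S j - S i| ≤ C₁ * ((a i / a j) ^ α + (a j / a i) ^ α)
  abs_add_sub_le : ∀ i j, IsArch_s4 a i j → (a i, a j) ∈ goldenArea →
    ∀ n : ℕ, 1 ≤ n → (n : ℝ) < γ * (1 / a i) ^ (2 - β / α) →
      |S (i + n) - S i| ≤ C₂ * ((1 / a i) ^ β + (1 / a j) ^ β)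

namespace HasExcursionBounds

lemma abs_sub_le_of_le (hS : HasExcursionBounds a S α C₁ β C₂ γ) (ha : IsLatticeSeq a)
    (hα : 0 ≤ α) (hC₁ : 0 ≤ C₁) (him : IsArch_s4 a i m) (hle : a i ≤ a m) :
    |S m - S i| ≤ 2 * C₁ * (a m / a i) ^ α := by
  have hi := ha.pos i
  have hm := ha.pos m
  calc |S m - S i| ≤ C₁ * ((a i / a m) ^ α + (a m / a i) ^ α) := hS.abs_sub_le i m him
    _ ≤ C₁ * ((a m / a i) ^ α + (a m / a i) ^ α) := by gcongr
    _ = 2 * C₁ * (a m / a i) ^ α := by ring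

lemma abs_sub_le_of_hasGoldenArch (hS : HasExcursionBounds a S α C₁ β C₂ γ)
    (ha : IsLatticeSeq a) (ha1 : ∀ t, a t ≤ 1) (hβ : 0 ≤ β) (hC₂ : 0 ≤ C₂)
    (him : IsArch_s4 a i m) (hG : HasGoldenArch a i)
    (hlong : (1 / a i) ^ (β / α) < γ * (a m / a i)) :
    |S m - S i| ≤ C₂ * (1 + 2 ^ β) * (1 / a i) ^ β := by
  obtain ⟨j, hij, hgold⟩ := hG
  have hi := ha.pos i
  have hj := ha.pos j
  have hm := ha.pos m
  have hX : 0 < 1 / a i := one_div_pos.mpr hi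
  have hlen : ((m - i : ℕ) : ℝ) < γ * (1 / a i) ^ (2 - β / α) := by
    refine (him.length_le ha ha1).trans_lt ?_
    rw [Real.rpow_sub hX, Real.rpow_two, ← mul_div_assoc, lt_div_iff₀ (by positivity)]
    calc 1 / (a i * a m) * (1 / a i) ^ (β / α)
        < 1 / (a i * a m) * (γ * (a m / a i)) := by gcongr
      _ = γ * (1 / a i) ^ 2 := by field_simp
  have hinv : 1 / a j ≤ 2 * (1 / a i) := by
    rw [mul_one_div, div_le_div_iff₀ hj hi, one_mul]
    exact left_le_two_mul_right_of_mem_goldenArea hgold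
  have h := hS.abs_add_sub_le i j hij hgold (m - i) (Nat.sub_pos_of_lt him.1) hlen
  rw [Nat.add_sub_cancel' him.1.le] at h
  calc |S m - S i| ≤ C₂ * ((1 / a i) ^ β + (1 / a j) ^ β) := h
    _ ≤ C₂ * ((1 / a i) ^ β + (2 * (1 / a i)) ^ β) := by gcongr
    _ = C₂ * (1 + 2 ^ β) * (1 / a i) ^ β := by
        rw [Real.mul_rpow zero_le_two hX.le]
        ring

lemma abs_sub_le_mul_div (hS : HasExcursionBounds a S α C₁ β C₂ γ)
    (ha : IsLatticeSeq a) (ha1 : ∀ t, a t ≤ 1) (hα : 1 ≤ α) (hβ : 0 ≤ β) (hC₁ : 0 ≤ C₁)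
    (hC₂ : 0 ≤ C₂) (hγ : 0 < γ) (him : IsArch_s4 a i m) (hle : a i ≤ a m)
    (hG : HasGoldenArch a i) :
    |S m - S i| ≤ (2 * C₁ * (1 / γ) ^ (α - 1) + C₂ * (1 + 2 ^ β) * γ) *
      (1 / a i) ^ (β * (1 - 1 / α)) * (a m / a i) :=
  le_mul_of_le_mul_rpow_of_imp_le_mul_rpow hα hγ (by positivity) (by positivity)
    (one_div_pos.mpr (ha.pos i)) (div_pos (ha.pos m) (ha.pos i))
    (hS.abs_sub_le_of_le ha (by linarith) hC₁ him hle)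
    (hS.abs_sub_le_of_hasGoldenArch ha ha1 hβ hC₂ him hG)

lemma abs_sub_le_of_mem_goldenArea (hS : HasExcursionBounds a S α C₁ β C₂ γ)
    (ha : IsLatticeSeq a) (hα : 0 ≤ α) (hC₁ : 0 ≤ C₁) {j : ℕ} (hij : IsArch_s4 a i j)
    (hgold : (a i, a j) ∈ goldenArea) : |S j - S i| ≤ 2 * C₁ * 2 ^ α := by
  have hi := ha.pos i
  have hj := ha.pos j
  calc |S j - S i| ≤ C₁ * ((a i / a j) ^ α + (a j / a i) ^ α) := hS.abs_sub_le i j hij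
    _ ≤ C₁ * (2 ^ α + 2 ^ α) := by
        gcongr
        · exact (div_le_iff₀ hj).mpr (left_le_two_mul_right_of_mem_goldenArea hgold)
        · exact (div_le_iff₀ hi).mpr (right_le_two_mul_left_of_mem_goldenArea hgold)
    _ = 2 * C₁ * 2 ^ α := by ring

end HasExcursionBounds

theorem HasExcursionBounds.exists_energy_le (hα : 1 ≤ α) (hβ : 0 ≤ β) (hC₁ : 0 < C₁)
    (hC₂ : 0 ≤ C₂) (hγ : 0 < γ) :
    ∃ C : ℝ, 0 < C ∧ ∀ a S : ℕ → ℝ, HasExcursionBounds a S α C₁ β C₂ γ → IsLatticeSeq a →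
      (∀ t, a t ≤ 1) → ∀ i j, IsArch_s4 a i j → (a i, a j) ∈ goldenArea →
      ∑ t ∈ Finset.Icc i j, |S t - S i| ≤
        C * ((1 / (a i * a j)) ^ (1 + (β / 2) * (1 - 1 / α)) *
          (1 + Real.log (1 / (a i * a j))) ^ 2) := by
  set δ := β * (1 - 1 / α) with hδ_def
  have hδ : 0 ≤ δ := mul_nonneg hβ (sub_nonneg.mpr (div_le_one_of_le₀ hα (by linarith)))
  set K := 2 * C₁ * (1 / γ) ^ (α - 1) + C₂ * (1 + 2 ^ β) * γ
  have hK : 0 ≤ K := by positivity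
  refine ⟨K * 2 ^ (δ / 2) + 2 * C₁ * 2 ^ α, by positivity, fun a S hS ha ha1 i j hij hgold => ?_⟩
  rw [show 1 + β / 2 * (1 - 1 / α) = 1 + δ / 2 by rw [hδ_def]; ring]
  set M := (1 / (a i * a j)) ^ (1 + δ / 2) * (1 + Real.log (1 / (a i * a j))) ^ 2
  have hM : 1 ≤ M := by
    have hW := one_le_one_div_mul_of_mem_goldenArea hgold
    exact one_le_mul_of_one_le_of_one_le (Real.one_le_rpow hW (by positivity))
      (one_le_pow₀ (le_add_of_nonneg_right (Real.log_nonneg hW)))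
  have hinterior : ∑ t ∈ Finset.Ico i j, |S t - S i| ≤ K * (2 ^ (δ / 2) * M) :=
    calc ∑ t ∈ Finset.Ico i j, |S t - S i|
        ≤ K * (1 / a i) ^ δ * energyPotential (a i) (a j) :=
          hij.sum_abs_sub_le ha ha1 (antitoneOn_mul_one_div_rpow hK hδ)
            (fun x hx => by positivity)
            (fun i m him hle => hS.abs_sub_le_mul_div ha ha1 hα hβ hC₁.le hC₂ hγ him hle)
            ⟨j, hij, hgold⟩
      _ ≤ K * (2 ^ (δ / 2) * M) := by
          rw [mul_assoc]
          exact mul_le_mul_of_nonneg_left (one_div_rpow_mul_energyPotential_le hgold hδ) hK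
  have hlast : |S j - S i| ≤ 2 * C₁ * 2 ^ α * M :=
    (hS.abs_sub_le_of_mem_goldenArea ha (by linarith) hC₁.le hij hgold).trans
      (le_mul_of_one_le_right (by positivity) hM)
  rw [← Finset.sum_Ico_add_eq_sum_Icc hij.1.le]
  linarith

end Growth

section Orbit

variable {q : ℝ × ℝ} {p : ℕ → ℝ × ℝ} {s i j : ℕ}

lemma mapsTo_bczT : Set.MapsTo bczT fareyTriangle fareyTriangle := by
  rintro ⟨a, b⟩ ⟨_, _, hb, hb1, _⟩
  have hle : ⌊(1 + a) / b⌋ * b ≤ 1 + a := (le_div_iff₀ hb).mp (Int.floor_le _)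
  have hlt : 1 + a < (⌊(1 + a) / b⌋ + 1) * b := (div_lt_iff₀ hb).mp (Int.lt_floor_add_one _)
  dsimp only at hb hb1
  refine ⟨hb, hb1, ?_, ?_, ?_⟩ <;> simp only [bczT] <;> linarith

/-- The first coordinates along the forward orbit of `q` under the BCZ map. -/
noncomputable def orbitFst (q : ℝ × ℝ) (t : ℕ) : ℝ := (bczT^[t] q).1

lemma orbitFst_le_one (hq : q ∈ fareyTriangle) (t : ℕ) : orbitFst q t ≤ 1 :=
  (mapsTo_bczT.iterate t hq).2.1

lemma isLatticeSeq_orbitFst (hq : q ∈ fareyTriangle) : IsLatticeSeq (orbitFst q) where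
  pos t := (mapsTo_bczT.iterate t hq).1
  exists_int t := by
    refine ⟨⌊(1 + (bczT^[t] q).1) / (bczT^[t] q).2⌋, ?_⟩
    simp only [orbitFst, Function.iterate_succ_apply', bczT]

lemma IsExcursion.iterate_bczT (hp : IsExcursion p s) {t : ℕ} (ht : t ≤ s) :
    bczT^[t] (p 0) = p t := by
  induction t with
  | zero => rfl
  | succ t ih => rw [Function.iterate_succ_apply', ih (by omega), hp.2.2.1 t ht]

lemma IsExcursion.orbitFst_eq (hp : IsExcursion p s) {t : ℕ} (ht : t ≤ s) :
    orbitFst (p 0) t = (p t).1 := congrArg Prod.fst (hp.iterate_bczT ht)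

lemma IsExcursion.isArch_s4 (hp : IsExcursion p s) : IsArch_s4 (orbitFst (p 0)) 0 s := by
  refine ⟨hp.1, fun t h0 hts => ?_⟩
  rw [hp.orbitFst_eq (Nat.zero_le s), hp.orbitFst_eq hts.le, hp.orbitFst_eq le_rfl]
  exact (hp.2.2.2 t h0 hts).imp id le_of_lt

lemma IsArch_s4.isExcursion (hq : q ∈ fareyTriangle) (h : IsArch_s4 (orbitFst q) i j) :
    IsExcursion (fun t => bczT^[i + t] q) (j - i) := by
  refine ⟨Nat.sub_pos_of_lt h.1, fun t _ => mapsTo_bczT.iterate _ hq, fun t _ => ?_,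
    fun t h0 htj => ?_⟩
  · exact Function.iterate_succ_apply' bczT (i + t) q
  · have hj : i + (j - i) = j := Nat.add_sub_cancel' h.1.le
    simp only [hj]
    exact ⟨(h.2 (i + t) (by omega) (by omega)).1,
      h.right_lt (isLatticeSeq_orbitFst hq) (by omega) (by omega)⟩

lemma birkhoffSum_bczT_add_sub (g : ℝ × ℝ → ℝ) (q : ℝ × ℝ) (i n : ℕ) :
    birkhoffSum bczT g (i + n) q - birkhoffSum bczT g i q =
      ∑ t ∈ Finset.range n, g (bczT^[i + t] q) := by
  simp only [birkhoffSum, Finset.sum_range_add, add_sub_cancel_left]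

lemma hasExcursionBounds_orbitFst {g : ℝ × ℝ → ℝ} {α C₁ β C₂ γ : ℝ}
    (hg₁ : ∀ (p : ℕ → ℝ × ℝ) (s : ℕ), IsExcursion p s →
      |∑ j ∈ Finset.range s, g (p j)| ≤
        C₁ * (((p 0).1 / (p s).1) ^ α + ((p s).1 / (p 0).1) ^ α))
    (hg₂ : ∀ (p : ℕ → ℝ × ℝ) (s : ℕ), IsExcursion p s →
      ((p 0).1, (p s).1) ∈ goldenArea →
      ∀ i : ℕ, 1 ≤ i → (i : ℝ) < γ * (1 / (p 0).1) ^ (2 - β / α) →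
        |∑ j ∈ Finset.range i, g (p j)| ≤
          C₂ * ((1 / (p 0).1) ^ β + (1 / (p s).1) ^ β))
    (hq : q ∈ fareyTriangle) :
    HasExcursionBounds (orbitFst q) (fun n => birkhoffSum bczT g n q) α C₁ β C₂ γ where
  abs_sub_le i j h := by
    have hj : i + (j - i) = j := Nat.add_sub_cancel' h.1.le
    have := hg₁ _ _ (h.isExcursion hq)
    rwa [← birkhoffSum_bczT_add_sub, hj] at this
  abs_add_sub_le i j h hgold n hn hlt := by
    have hj : i + (j - i) = j := Nat.add_sub_cancel' h.1.le
    have := hg₂ _ _ (h.isExcursion hq)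
    simp only [hj, ← birkhoffSum_bczT_add_sub] at this
    exact this hgold n hn hlt

end Orbit

theorem energy_bound_general'_general (g : ℝ × ℝ → ℝ) (α C₁ β C₂ γ : ℝ)
    (hα : 1 ≤ α) (hC₁ : 0 < C₁) (hβ : 0 ≤ β) (hC₂ : 0 ≤ C₂) (hγ : 0 < γ)
    (hg₁ : ∀ (p : ℕ → ℝ × ℝ) (s : ℕ), IsExcursion p s →
      |∑ j ∈ Finset.range s, g (p j)| ≤
        C₁ * (((p 0).1 / (p s).1) ^ α + ((p s).1 / (p 0).1) ^ α))
    (hg₂ : ∀ (p : ℕ → ℝ × ℝ) (s : ℕ), IsExcursion p s →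
      ((p 0).1, (p s).1) ∈ goldenArea →
      ∀ i : ℕ, 1 ≤ i → (i : ℝ) < γ * (1 / (p 0).1) ^ (2 - β / α) →
        |∑ j ∈ Finset.range i, g (p j)| ≤
          C₂ * ((1 / (p 0).1) ^ β + (1 / (p s).1) ^ β)) :
    ∃ C : ℝ, 0 < C ∧ ∀ (p : ℕ → ℝ × ℝ) (s : ℕ), IsExcursion p s →
      ((p 0).1, (p s).1) ∈ goldenArea →
      ∑ i ∈ Finset.Icc 1 s, |∑ j ∈ Finset.range i, g (p j)| ≤
        C * ((1 / ((p 0).1 * (p s).1)) ^ (1 + (β / 2) * (1 - 1 / α)) *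
          (1 + Real.log (1 / ((p 0).1 * (p s).1))) ^ 2) := by
  obtain ⟨C, hC, hbound⟩ := HasExcursionBounds.exists_energy_le hα hβ hC₁ hC₂ hγ
  refine ⟨C, hC, fun p s hp hgold => ?_⟩
  have hq : p 0 ∈ fareyTriangle := hp.2.1 0 (Nat.zero_le s)
  have hsum : ∀ i ∈ Finset.Icc 1 s, |∑ j ∈ Finset.range i, g (p j)| =
      |birkhoffSum bczT g i (p 0) - birkhoffSum bczT g 0 (p 0)| := fun i hi => by
    rw [birkhoffSum_zero, sub_zero, birkhoffSum]
    congr 1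
    refine Finset.sum_congr rfl fun j hj => ?_
    rw [hp.iterate_bczT ((Finset.mem_range.mp hj).le.trans (Finset.mem_Icc.mp hi).2)]
  have henergy := hbound _ _ (hasExcursionBounds_orbitFst hg₁ hg₂ hq) (isLatticeSeq_orbitFst hq)
    (orbitFst_le_one hq) 0 s hp.isArch_s4
  rw [hp.orbitFst_eq (Nat.zero_le s), hp.orbitFst_eq le_rfl] at henergy
  calc ∑ i ∈ Finset.Icc 1 s, |∑ j ∈ Finset.range i, g (p j)|
      = ∑ i ∈ Finset.Icc 1 s, |birkhoffSum bczT g i (p 0) - birkhoffSum bczT g 0 (p 0)| :=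
        Finset.sum_congr rfl hsum
    _ ≤ ∑ i ∈ Finset.Icc 0 s, |birkhoffSum bczT g i (p 0) - birkhoffSum bczT g 0 (p 0)| :=
        Finset.sum_le_sum_of_subset_of_nonneg (Finset.Icc_subset_Icc_left zero_le_one)
          fun _ _ _ => abs_nonneg _
    _ ≤ _ := henergy hgold

theorem energy_bound_general' (g : ℝ × ℝ → ℝ) (α C₁ β C₂ γ : ℝ)
    (hα : 1 < α) (hC₁ : 0 < C₁) (hβ0 : 0 < β) (hβα : β < α) (hC₂ : 0 < C₂) (hγ : 0 < γ)
    (hg₁ : ∀ (p : ℕ → ℝ × ℝ) (s : ℕ), IsExcursion p s →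
      |∑ j ∈ Finset.range s, g (p j)| <
        C₁ * (((p 0).1 / (p s).1) ^ α + ((p s).1 / (p 0).1) ^ α))
    (hg₂ : ∀ (p : ℕ → ℝ × ℝ) (s : ℕ), IsExcursion p s →
      ((p 0).1, (p s).1) ∈ goldenArea →
      ∀ i : ℕ, 1 ≤ i → (i : ℝ) < γ * (1 / (p 0).1) ^ (2 - β / α) →
        |∑ j ∈ Finset.range i, g (p j)| <
          C₂ * ((1 / (p 0).1) ^ β + (1 / (p s).1) ^ β))
    (ε : ℝ) (hε : 0 < ε) :
    ∃ C : ℝ, 0 < C ∧ ∀ (p : ℕ → ℝ × ℝ) (s : ℕ), IsExcursion p s →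
      ((p 0).1, (p s).1) ∈ goldenArea →
      ∑ i ∈ Finset.Icc 1 s, |∑ j ∈ Finset.range i, g (p j)| ≤
        C * (1 / ((p 0).1 * (p s).1)) ^ (1 + (β / 2) * (1 - 1 / α) + ε) := by
  obtain ⟨C, hC, hbound⟩ := energy_bound_general'_general g α C₁ β C₂ γ hα.le hC₁ hβ0.le hC₂.le hγ
    (fun p s hp => (hg₁ p s hp).le) (fun p s hp hgold i hi hlt => (hg₂ p s hp hgold i hi hlt).le)
  refine ⟨C * (1 + 2 / ε) ^ 2, by positivity, fun p s hp hgold => (hbound p s hp hgold).trans ?_⟩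
  rw [mul_assoc]
  exact mul_le_mul_of_nonneg_left
    (rpow_mul_one_add_log_sq_le (one_le_one_div_mul_of_mem_goldenArea hgold) _ hε) hC.le
end
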